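/- Let A ⊆ B be a symmetric C*-inclusion with a residually symmetric conditional expectation E : B → A, and assume that A separates ideals in B. Then B is purely infinite if and only if every nonzero a ∈ A⁺ is properly infinite in B and E(b) ≼ b for every b ∈ B⁺. Moreover, if A separates ideals in B and B is purely infinite, then A⁺ fills B. -/

import Mathlib

/- Common definitions for C*-inclusions, ideals, Cuntz subequivalence,
   supporting/filling families and pure infiniteness. -/

namespace KM

variable {B : Type*} [NonUnitalCStarAlgebra B] [PartialOrder B]

/-- `J` is a closed two-sided ideal of the C*-algebra `C` (given as a subset of `B`). -/
def IsIdealIn (C J : Set B) : Prop :=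
  J ⊆ C ∧ IsClosed J ∧ (0 : B) ∈ J ∧ (∀ x ∈ J, ∀ y ∈ J, x + y ∈ J) ∧
    (∀ (c : ℂ), ∀ x ∈ J, c • x ∈ J) ∧ (∀ x ∈ J, ∀ c ∈ C, c * x ∈ J ∧ x * c ∈ J)

/-- `J` is a closed two-sided ideal of `B`. -/
def IsIdeal (J : Set B) : Prop := IsIdealIn Set.univ J

/-- `A` is a C*-subalgebra of `B`: a closed `*`-subalgebra. -/
def IsSubCStar (A : Set B) : Prop :=
  IsClosed A ∧ (0 : B) ∈ A ∧ (∀ x ∈ A, ∀ y ∈ A, x + y ∈ A) ∧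
    (∀ (c : ℂ), ∀ x ∈ A, c • x ∈ A) ∧ (∀ x ∈ A, ∀ y ∈ A, x * y ∈ A) ∧
    (∀ x ∈ A, star x ∈ A)

/-- The smallest closed two-sided ideal of the C*-algebra `C` containing `S`. -/
def idealGenIn (C S : Set B) : Set B := ⋂₀ {J : Set B | IsIdealIn C J ∧ S ⊆ J}

/-- The smallest closed two-sided ideal of `B` containing `S`; for an ideal `I` of a
subalgebra `A` this is the induced ideal `BIB`. -/
def idealGen (S : Set B) : Set B := idealGenIn Set.univ S

/-- `I` is a restricted ideal of the subalgebra `A`, i.e. `I = J ∩ A` for an ideal `J` of `B`. -/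
def IsRestricted (A I : Set B) : Prop := ∃ J : Set B, IsIdeal J ∧ I = J ∩ A

/-- `J` is an induced ideal of `B`: `J = BIB` for some ideal `I` of `A`. -/
def IsInduced (A J : Set B) : Prop := ∃ I : Set B, IsIdealIn A I ∧ J = idealGen I

/-- `A` separates ideals in `B`. -/
def SeparatesIdeals (A : Set B) : Prop :=
  ∀ J₁ J₂ : Set B, IsIdeal J₁ → IsIdeal J₂ → J₁ ∩ A = J₂ ∩ A → J₁ = J₂

/-- Cuntz subequivalence `a ≼ b`. -/
def CuntzBelow (a b : B) : Prop :=
  ∀ ε : ℝ, 0 < ε → ∃ x : B, ‖a - star x * b * x‖ < ε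

/-- `F` supports `B`. -/
def Supports (F : Set B) : Prop :=
  ∀ b : B, 0 ≤ b → b ≠ 0 → ∃ a ∈ F, a ≠ 0 ∧ CuntzBelow a b

/-- `F` residually supports the C*-algebra `C ⊆ B`: for every ideal `J` of `C`, the image
of `F` in `C/J` supports `C/J`, phrased concretely via the distance to `J`. -/
def ResiduallySupportsIn (C F : Set B) : Prop :=
  ∀ J : Set B, IsIdealIn C J → ∀ b ∈ C, 0 ≤ b → b ∉ J →
    ∃ a ∈ F, a ∉ J ∧ ∀ ε : ℝ, 0 < ε → ∃ x ∈ C,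
      Metric.infDist (a - star x * b * x) J < ε

/-- `F` residually supports `B`. -/
def ResiduallySupports (F : Set B) : Prop := ResiduallySupportsIn Set.univ F

/-- `x` lies in `aB = {a c : c ∈ B}`. -/
def MemRightMul (a x : B) : Prop := ∃ c : B, x = a * c

/-- `a` is properly infinite in `B`. -/
def ProperlyInfinite (a : B) : Prop :=
  ∀ ε : ℝ, 0 < ε → ∃ x y : B, MemRightMul a x ∧ MemRightMul a y ∧
    ‖star x * x - a‖ ≤ ε ∧ ‖star y * y - a‖ ≤ ε ∧ ‖star x * y‖ ≤ ε

/-- `a` is infinite in `B`. -/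
def InfiniteElt (a : B) : Prop :=
  ∃ b : B, 0 ≤ b ∧ b ≠ 0 ∧ ∀ ε : ℝ, 0 < ε → ∃ x y : B,
    MemRightMul a x ∧ MemRightMul a y ∧
    ‖star x * x - a‖ ≤ ε ∧ ‖star y * y - b‖ ≤ ε ∧ ‖star x * y‖ ≤ ε

/-- The pair `a, b` is separated in `B`. -/
def SeparatedPair (a b : B) : Prop :=
  ∀ ε : ℝ, 0 < ε → ∃ x y : B, MemRightMul a x ∧ MemRightMul b y ∧
    ‖star x * x - a‖ ≤ ε ∧ ‖star y * y - b‖ ≤ ε ∧ ‖star x * y‖ ≤ ε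

/-- A character of `B`: a nonzero multiplicative linear functional `B → ℂ`. -/
def IsCharacter (φ : B →ₗ[ℂ] ℂ) : Prop :=
  (∀ x y : B, φ (x * y) = φ x * φ y) ∧ φ ≠ 0

/-- `B` is purely infinite: it admits no characters and for nonzero positive `a, b`,
`a ≼ b` iff `a` lies in the ideal generated by `b`. -/
def PurelyInfinite (B : Type*) [NonUnitalCStarAlgebra B] [PartialOrder B] : Prop :=
  (¬ ∃ φ : B →ₗ[ℂ] ℂ, IsCharacter φ) ∧
    ∀ a b : B, 0 ≤ a → a ≠ 0 → 0 ≤ b → b ≠ 0 → (CuntzBelow a b ↔ a ∈ idealGen {b})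

/-- `p` is a projection. -/
def IsProjection (p : B) : Prop := star p = p ∧ p * p = p

/-- `B` has the ideal property: projections separate ideals. -/
def IdealProperty (B : Type*) [NonUnitalCStarAlgebra B] [PartialOrder B] : Prop :=
  ∀ J₁ J₂ : Set B, IsIdeal J₁ → IsIdeal J₂ →
    (∀ p : B, IsProjection p → (p ∈ J₁ ↔ p ∈ J₂)) → J₁ = J₂

/-- `B` is strongly purely infinite: every pair of positive elements is separated. -/
def StronglyPurelyInfinite (B : Type*) [NonUnitalCStarAlgebra B] [PartialOrder B] : Prop :=
  ∀ a b : B, 0 ≤ a → 0 ≤ b → SeparatedPair a b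

/-- `D` is a hereditary C*-subalgebra of `B`. -/
def IsHereditary (D : Set B) : Prop :=
  IsSubCStar D ∧ ∀ b d : B, d ∈ D → 0 ≤ b → b ≤ d → b ∈ D

/-- `F` fills `B`. -/
def Fills (F : Set B) : Prop :=
  ∀ D : Set B, IsHereditary D → (∃ d ∈ D, d ≠ 0) →
    ∀ J : Set B, IsIdeal J → ¬ D ⊆ J →
      ∃ z : B, z ∉ J ∧ z * star z ∈ D ∧ star z * z ∈ F

/-- Closed linear span of a subset of `B`. -/
def closSpan (S : Set B) : Set B := closure ↑(Submodule.span ℂ S)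

/-- The C*-inclusion `A ⊆ B` is symmetric. -/
def SymmetricInclusion (A : Set B) : Prop :=
  ∀ I : Set B, IsRestricted A I →
    closSpan {z : B | ∃ x ∈ I, ∃ b : B, z = x * b} =
      closSpan {z : B | ∃ b : B, ∃ x ∈ I, z = b * x}

/-- `b` is a normaliser of `A` in `B`. -/
def IsNormalizer (A : Set B) (b : B) : Prop :=
  (∀ a ∈ A, b * a * star b ∈ A) ∧ (∀ a ∈ A, star b * a * b ∈ A)

/-- The inclusion `A ⊆ B` is nondegenerate: the closed span of `A·B` is `B`. -/
def Nondegenerate (A : Set B) : Prop :=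
  closSpan {z : B | ∃ a ∈ A, ∃ b : B, z = a * b} = Set.univ

/-- The inclusion `A ⊆ B` is regular: nondegenerate and `B` is the closed linear span of
the normalisers of `A`. -/
def RegularInclusion (A : Set B) : Prop :=
  Nondegenerate A ∧ closSpan {b : B | IsNormalizer A b} = Set.univ

end KM

open KM

variable {B : Type*} [NonUnitalCStarAlgebra B] [PartialOrder B] [StarOrderedRing B]

/- The elements `x` such that `a ⊕ x* x ≼ a` form a closed ideal `J(a)`, and `a ≥ 0` is properly
infinite iff `a ∈ J(a)`. If `B` is purely infinite, then `J(a)` contains every square-zero element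
of `K = ⟨a⟩`. An ideal containing the square-zero elements of `K` contains the commutators `[x, y]`
with `y ∈ K`, so `K / J(a)` is commutative and, `B` having no characters, it vanishes; thus
`a ∈ J(a)`. Symmetry gives `J = span (J ∩ A) B = span B (J ∩ A)` for every ideal `J`, whence
`E (J⁺) ⊆ J` and `E b ≼ b`. Conversely, residual symmetry makes `{x | E (x* x) ∈ J}` an ideal; it
has the same intersection with `A` as `J`, so `b ∈ ⟨E b⟩` by separation, and for `a ∈ ⟨b⟩` proper
infiniteness of `E b` gives `a ≼ E b ≼ b`. -/

namespace KM

open Filter Topology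

section FunctionalCalculus

/-- The cut-down `(a - ε)₊` of a positive element `a`. -/
noncomputable def cutDown (ε : ℝ) (a : B) : B := cfcₙ (fun t : ℝ ↦ max (t - ε) 0) a

/-- An approximate unit for the hereditary subalgebra generated by `a ≥ 0`: the function of `a`
that is `1` on `[ε, ∞)` and `t² / ε²` on `[0, ε]`. It is quadratic near `0` so that it factors
through `a` inside the (non-unital) functional calculus. -/
noncomputable def localUnit (ε : ℝ) (a : B) : B := cfcₙ (fun t : ℝ ↦ t ^ 2 / max t ε ^ 2) a

theorem continuous_localUnit_fun {ε : ℝ} (hε : 0 < ε) :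
    Continuous fun t : ℝ ↦ t ^ 2 / max t ε ^ 2 :=
  (by fun_prop : Continuous fun t : ℝ ↦ t ^ 2).div (by fun_prop) fun t ↦
    (pow_pos (lt_max_of_lt_right hε) 2).ne'

theorem cutDown_nonneg (ε : ℝ) (a : B) : 0 ≤ cutDown ε a :=
  cfcₙ_nonneg fun _ _ ↦ le_max_right _ _

omit [PartialOrder B] [StarOrderedRing B] in
theorem isSelfAdjoint_localUnit (ε : ℝ) (a : B) : IsSelfAdjoint (localUnit ε a) :=
  cfcₙ_predicate (R := ℝ) _ a

theorem norm_cutDown_sub_le {ε : ℝ} (hε : 0 ≤ ε) {a : B} (ha : 0 ≤ a) : ‖cutDown ε a - a‖ ≤ ε := by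
  have hsub : cutDown ε a - a = cfcₙ (fun t : ℝ ↦ max (t - ε) 0 - t) a := by
    rw [cfcₙ_sub (hf := by fun_prop) (hf0 := by simp [hε]) (hg := by fun_prop), cfcₙ_id' ℝ a,
      cutDown]
  rw [hsub]
  refine norm_cfcₙ_le fun t ht ↦ ?_
  have ht0 := quasispectrum_nonneg_of_nonneg a ha t ht
  rw [Real.norm_eq_abs, abs_le]
  grind

theorem tendsto_cutDown {a : B} (ha : 0 ≤ a) :
    Tendsto (fun n : ℕ ↦ cutDown (1 / ((n : ℝ) + 1)) a) atTop (𝓝 a) :=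
  tendsto_iff_norm_sub_tendsto_zero.2 <|
    squeeze_zero (fun _ ↦ norm_nonneg _) (fun _ ↦ norm_cutDown_sub_le (by positivity) ha)
      tendsto_one_div_add_atTop_nhds_zero_nat

omit [PartialOrder B] [StarOrderedRing B] in
theorem commute_cutDown (ε : ℝ) {a x : B} (hx : Commute a x) :
    Commute (cutDown ε a) x :=
  hx.cfcₙ_real _

omit [PartialOrder B] [StarOrderedRing B] in
theorem localUnit_eq_mul {ε : ℝ} (hε : 0 < ε) {a : B} (ha : IsSelfAdjoint a) :
    localUnit ε a = a * cfcₙ (fun t : ℝ ↦ t / max t ε ^ 2) a := by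
  have hcont : Continuous fun t : ℝ ↦ t / max t ε ^ 2 :=
    continuous_id.div (by fun_prop) fun t ↦ (pow_pos (lt_max_of_lt_right hε) 2).ne'
  conv_rhs => enter [1]; rw [← cfcₙ_id' ℝ a]
  rw [← cfcₙ_mul (hf := by fun_prop) (hg := hcont.continuousOn), localUnit]
  congr 1 with t
  ring

omit [PartialOrder B] [StarOrderedRing B] in
theorem localUnit_mul_cutDown {ε : ℝ} (hε : 0 < ε) (a : B) :
    localUnit ε a * cutDown ε a = cutDown ε a := by
  rw [localUnit, cutDown, ← cfcₙ_mul (hf := (continuous_localUnit_fun hε).continuousOn)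
    (hg := by fun_prop) (hg0 := by simp [hε.le])]
  congr 1 with t
  obtain ht | ht := le_total t ε
  · rw [max_eq_right (sub_nonpos.2 ht), mul_zero]
  · rw [max_eq_left ht, div_self (pow_pos (hε.trans_le ht) 2).ne', one_mul]

omit [PartialOrder B] [StarOrderedRing B] in
theorem cfcₙ_mul_one_sub_sq {f : ℝ → ℝ} (hf : Continuous f) (hf0 : f 0 = 0) {a : B}
    (ha : IsSelfAdjoint a) :
    cfcₙ (fun t : ℝ ↦ t * (1 - f t) ^ 2) a =
      a - cfcₙ f a * a - a * cfcₙ f a + cfcₙ f a * a * cfcₙ f a := by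
  have hexpand : (fun t : ℝ ↦ t * (1 - f t) ^ 2) =
      fun t : ℝ ↦ t - f t * t - t * f t + f t * t * f t := by
    ext t; ring
  rw [hexpand, cfcₙ_add (hf := by fun_prop) (hg := by fun_prop),
    cfcₙ_sub (hf := by fun_prop) (hg := by fun_prop),
    cfcₙ_sub (hf := by fun_prop) (hg := by fun_prop),
    cfcₙ_mul (hf := by fun_prop) (hg := by fun_prop),
    cfcₙ_mul (hf := by fun_prop) (hg := by fun_prop),
    cfcₙ_mul (hf := by fun_prop) (hg := by fun_prop),
    cfcₙ_mul (hf := by fun_prop) (hg := by fun_prop), cfcₙ_id' ℝ a]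

/- Both sides are conjugates by `1 - u`, written without the unit. -/
theorem conjugate_one_sub_mono {u p q : B} (hu : IsSelfAdjoint u) (h : p ≤ q) :
    p - u * p - p * u + u * p * u ≤ q - u * q - q * u + u * q * u := by
  set s := CFC.sqrt (q - p)
  have hs : star s = s := (CFC.sqrt_nonneg _).isSelfAdjoint
  have hss : s * s = q - p := CFC.sqrt_mul_sqrt_self _ (sub_nonneg.2 h)
  have hsquare : (q - u * q - q * u + u * q * u) - (p - u * p - p * u + u * p * u) =
      (s - u * s) * star (s - u * s) := by
    rw [star_sub, star_mul, hu.star_eq, hs, sub_mul, mul_sub, mul_sub, ← mul_assoc s, hss,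
      mul_assoc u s s, hss, mul_assoc u s, ← mul_assoc s, hss]
    noncomm_ring
  rw [← sub_nonneg, hsquare]
  exact mul_star_self_nonneg _

theorem norm_sub_cfcₙ_mul_sq_le {f : ℝ → ℝ} (hf : Continuous f) (hf0 : f 0 = 0) {a s : B}
    (h : s * star s ≤ a) :
    ‖s - cfcₙ f a * s‖ ^ 2 ≤ ‖cfcₙ (fun t : ℝ ↦ t * (1 - f t) ^ 2) a‖ := by
  have hu : IsSelfAdjoint (cfcₙ f a) := cfcₙ_predicate (R := ℝ) f a
  have hle : (s - cfcₙ f a * s) * star (s - cfcₙ f a * s) ≤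
      cfcₙ (fun t : ℝ ↦ t * (1 - f t) ^ 2) a := by
    rw [cfcₙ_mul_one_sub_sq hf hf0 ((mul_star_self_nonneg s).trans h).isSelfAdjoint]
    convert conjugate_one_sub_mono hu h using 1
    rw [star_sub, star_mul, hu.star_eq]
    noncomm_ring
  rw [sq, ← CStarRing.norm_self_mul_star]
  exact CStarAlgebra.norm_le_norm_of_nonneg_of_le (mul_star_self_nonneg _) hle

theorem norm_sub_localUnit_mul_sq_le {ε : ℝ} (hε : 0 < ε) {a s : B} (h : s * star s ≤ a) :
    ‖s - localUnit ε a * s‖ ^ 2 ≤ ε := by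
  refine (norm_sub_cfcₙ_mul_sq_le (continuous_localUnit_fun hε) (by simp) h).trans
    (norm_cfcₙ_le fun t ht ↦ ?_)
  have ht0 := quasispectrum_nonneg_of_nonneg a ((mul_star_self_nonneg s).trans h) t ht
  rw [Real.norm_of_nonneg (by positivity)]
  obtain hle | hle := le_total t ε
  · have hquot : t ^ 2 / max t ε ^ 2 ≤ 1 := by
      rw [max_eq_right hle]
      exact div_le_one_of_le₀ (by gcongr) (by positivity)
    have hquot0 : 0 ≤ t ^ 2 / max t ε ^ 2 := by positivity
    calc t * (1 - t ^ 2 / max t ε ^ 2) ^ 2 ≤ t * 1 ^ 2 := by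
          gcongr; linarith
      _ ≤ ε := by rwa [one_pow, mul_one]
  · rw [max_eq_left hle, div_self (pow_pos (hε.trans_le hle) 2).ne']
    simpa using hε.le

theorem tendsto_localUnit_mul {a s : B} (h : s * star s ≤ a) :
    Tendsto (fun n : ℕ ↦ localUnit (1 / ((n : ℝ) + 1)) a * s) atTop (𝓝 s) := by
  rw [tendsto_iff_norm_sub_tendsto_zero]
  refine squeeze_zero (g := fun n : ℕ ↦ √(1 / ((n : ℝ) + 1))) (fun _ ↦ norm_nonneg _)
    (fun n ↦ ?_) ?_
  · rw [norm_sub_rev]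
    exact Real.le_sqrt_of_sq_le (norm_sub_localUnit_mul_sq_le (by positivity) h)
  · simpa using (tendsto_one_div_add_atTop_nhds_zero_nat (𝕜 := ℝ)).sqrt

end FunctionalCalculus

section ClosedRightIdeal

variable {R : Type*} [NonUnitalRing R] [TopologicalSpace R] [IsTopologicalRing R]

/-- The closed right ideal `closure (a R)` generated by `a` when `a` lies in it (as every positive
element of a C⋆-algebra does). -/
def closedRightIdeal (a : R) : AddSubgroup R := (AddMonoidHom.mulLeft a).range.topologicalClosure

theorem mul_mem_closedRightIdeal (a c : R) : a * c ∈ closedRightIdeal a :=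
  subset_closure ⟨c, rfl⟩

theorem isClosed_closedRightIdeal (a : R) : IsClosed (closedRightIdeal a : Set R) :=
  isClosed_closure

theorem closedRightIdeal_mul_mem {a x : R} (hx : x ∈ closedRightIdeal a) (c : R) :
    x * c ∈ closedRightIdeal a :=
  map_mem_closure (f := (· * c)) (continuous_mul_const c) hx fun _ ⟨d, hd⟩ ↦
    ⟨d * c, by simp [← hd, mul_assoc]⟩

theorem closedRightIdeal_le {a b : R} (ha : a ∈ closedRightIdeal b) :
    closedRightIdeal a ≤ closedRightIdeal b :=
  AddSubgroup.topologicalClosure_minimal _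
    (by rintro _ ⟨c, rfl⟩; exact closedRightIdeal_mul_mem ha c) (isClosed_closedRightIdeal b)

end ClosedRightIdeal

section Factorisation

omit [PartialOrder B] [StarOrderedRing B] in
theorem norm_mul_eq_of_star_mul_self_eq {x y : B} (h : star x * x = star y * y) (c : B) :
    ‖x * c‖ = ‖y * c‖ := by
  have hgram : star (x * c) * (x * c) = star (y * c) * (y * c) := by
    simp only [star_mul, mul_assoc]
    rw [← mul_assoc (star x), h, mul_assoc]
  rw [← sq_eq_sq₀ (norm_nonneg _) (norm_nonneg _), sq, sq, ← CStarRing.norm_star_mul_self, hgram,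
    CStarRing.norm_star_mul_self]

omit [PartialOrder B] [StarOrderedRing B] in
/- `y c ↦ x c` extends to an isometry of `closure (y B)` onto `closure (x B)`. -/
theorem exists_mem_closedRightIdeal_of_star_mul_self_eq {x y w : B}
    (h : star x * x = star y * y) (hw : w ∈ closedRightIdeal y) :
    ∃ z ∈ closedRightIdeal x, star z * z = star w * w := by
  obtain ⟨v, hv, hlim⟩ := mem_closure_iff_seq_limit.1 hw
  choose c hc using hv
  replace hlim : Tendsto (fun n ↦ y * c n) atTop (𝓝 w) := by simpa [← funext hc] using hlim
  have hcauchy : CauchySeq fun n ↦ x * c n := by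
    rw [Metric.cauchySeq_iff']
    intro ε hε
    obtain ⟨N, hN⟩ := Metric.cauchySeq_iff'.1 hlim.cauchySeq ε hε
    refine ⟨N, fun n hn ↦ ?_⟩
    rw [dist_eq_norm, ← mul_sub, norm_mul_eq_of_star_mul_self_eq h, mul_sub, ← dist_eq_norm]
    exact hN n hn
  obtain ⟨z, hz⟩ := cauchySeq_tendsto_of_complete hcauchy
  refine ⟨z, (isClosed_closedRightIdeal x).mem_of_tendsto hz
    (.of_forall fun n ↦ mul_mem_closedRightIdeal x _), ?_⟩
  refine tendsto_nhds_unique (hz.star.mul hz) ((hlim.star.mul hlim).congr fun n ↦ ?_)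
  simp only [star_mul, mul_assoc]
  rw [← mul_assoc (star y), ← h, mul_assoc]

theorem mem_closedRightIdeal_of_mul_star_self_le {a s : B} (h : s * star s ≤ a) :
    s ∈ closedRightIdeal a := by
  refine (isClosed_closedRightIdeal a).mem_of_tendsto (tendsto_localUnit_mul h)
    (.of_forall fun n ↦ ?_)
  rw [localUnit_eq_mul (by positivity) ((mul_star_self_nonneg s).trans h).isSelfAdjoint, mul_assoc]
  exact mul_mem_closedRightIdeal a _

theorem star_sqrt (a : B) : star (CFC.sqrt a) = CFC.sqrt a := (CFC.sqrt_nonneg a).isSelfAdjoint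

theorem sqrt_mem_closedRightIdeal_of_le {a b : B} (ha : 0 ≤ a) (h : a ≤ b) :
    CFC.sqrt a ∈ closedRightIdeal b :=
  mem_closedRightIdeal_of_mul_star_self_le (by rwa [star_sqrt, CFC.sqrt_mul_sqrt_self a ha])

theorem mem_closedRightIdeal_of_le {a b : B} (ha : 0 ≤ a) (h : a ≤ b) : a ∈ closedRightIdeal b := by
  simpa only [CFC.sqrt_mul_sqrt_self a ha] using
    closedRightIdeal_mul_mem (sqrt_mem_closedRightIdeal_of_le ha h) (CFC.sqrt a)

theorem closedRightIdeal_le_sqrt {a : B} (ha : 0 ≤ a) :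
    closedRightIdeal a ≤ closedRightIdeal (CFC.sqrt a) :=
  closedRightIdeal_le <| by
    simpa only [CFC.sqrt_mul_sqrt_self a ha] using
      mul_mem_closedRightIdeal (CFC.sqrt a) (CFC.sqrt a)

theorem exists_star_mul_self_eq_of_le {p x : B} (hp : 0 ≤ p) (h : p ≤ star x * x) :
    ∃ z ∈ closedRightIdeal x, star z * z = p := by
  set q := star x * x
  have hq : 0 ≤ q := hp.trans h
  obtain ⟨z, hz, hzp⟩ := exists_mem_closedRightIdeal_of_star_mul_self_eq (x := x)
    (by rw [star_sqrt, CFC.sqrt_mul_sqrt_self q hq])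
    (closedRightIdeal_le_sqrt hq (sqrt_mem_closedRightIdeal_of_le hp h))
  exact ⟨z, hz, by rw [hzp, star_sqrt, CFC.sqrt_mul_sqrt_self p hp]⟩

end Factorisation

section Ideals

variable {J K S : Set B}

section Basic

omit [PartialOrder B] [StarOrderedRing B]

namespace IsIdeal

theorem isClosed (hJ : IsIdeal J) : IsClosed J := hJ.2.1

theorem zero_mem (hJ : IsIdeal J) : (0 : B) ∈ J := hJ.2.2.1

theorem add_mem (hJ : IsIdeal J) {x y : B} (hx : x ∈ J) (hy : y ∈ J) : x + y ∈ J :=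
  hJ.2.2.2.1 x hx y hy

theorem smul_mem (hJ : IsIdeal J) (c : ℂ) {x : B} (hx : x ∈ J) : c • x ∈ J :=
  hJ.2.2.2.2.1 c x hx

theorem mul_mem_left (hJ : IsIdeal J) (c : B) {x : B} (hx : x ∈ J) : c * x ∈ J :=
  (hJ.2.2.2.2.2 x hx c trivial).1

theorem mul_mem_right (hJ : IsIdeal J) (c : B) {x : B} (hx : x ∈ J) : x * c ∈ J :=
  (hJ.2.2.2.2.2 x hx c trivial).2

/-- The complex subspace underlying a closed two-sided ideal. -/
def toSubmodule (hJ : IsIdeal J) : Submodule ℂ B where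
  carrier := J
  add_mem' := hJ.add_mem
  zero_mem' := hJ.zero_mem
  smul_mem' c _ := hJ.smul_mem c

theorem sub_mem (hJ : IsIdeal J) {x y : B} (hx : x ∈ J) (hy : y ∈ J) : x - y ∈ J :=
  hJ.toSubmodule.sub_mem hx hy

theorem sum_mem (hJ : IsIdeal J) {ι : Type*} {s : Finset ι} {f : ι → B} (hf : ∀ i ∈ s, f i ∈ J) :
    ∑ i ∈ s, f i ∈ J :=
  hJ.toSubmodule.sum_mem hf

theorem closedRightIdeal_subset (hJ : IsIdeal J) {a : B} (ha : a ∈ J) :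
    (closedRightIdeal a : Set B) ⊆ J :=
  closure_minimal (by rintro _ ⟨c, rfl⟩; exact hJ.mul_mem_right c ha) hJ.isClosed

end IsIdeal

theorem isIdeal_of_submodule (V : Submodule ℂ B) (hV : IsClosed (V : Set B))
    (hmul : ∀ x ∈ V, ∀ c, c * x ∈ V ∧ x * c ∈ V) : IsIdeal (V : Set B) :=
  ⟨Set.subset_univ _, hV, V.zero_mem, fun _ hx _ hy ↦ V.add_mem hx hy, fun c _ ↦ V.smul_mem c,
    fun x hx c _ ↦ hmul x hx c⟩

theorem isIdeal_singleton_zero : IsIdeal ({0} : Set B) := by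
  simpa using isIdeal_of_submodule (⊥ : Submodule ℂ B) (by simp) (by simp)

theorem isIdeal_univ : IsIdeal (Set.univ : Set B) := by
  simpa using isIdeal_of_submodule (⊤ : Submodule ℂ B) (by simp) (by simp)

theorem isIdeal_sInter {𝒥 : Set (Set B)} (h : ∀ J ∈ 𝒥, IsIdeal J) : IsIdeal (⋂₀ 𝒥) :=
  ⟨Set.subset_univ _, isClosed_sInter fun J hJ ↦ (h J hJ).isClosed, fun J hJ ↦ (h J hJ).zero_mem,
    fun _ hx _ hy J hJ ↦ (h J hJ).add_mem (hx J hJ) (hy J hJ),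
    fun c _ hx J hJ ↦ (h J hJ).smul_mem c (hx J hJ),
    fun _ hx c _ ↦ ⟨fun J hJ ↦ (h J hJ).mul_mem_left c (hx J hJ),
      fun J hJ ↦ (h J hJ).mul_mem_right c (hx J hJ)⟩⟩

theorem IsIdeal.inter (hJ : IsIdeal J) (hK : IsIdeal K) : IsIdeal (J ∩ K) := by
  rw [← Set.sInter_pair]
  exact isIdeal_sInter (by simp [hJ, hK])

theorem isIdeal_idealGen (S : Set B) : IsIdeal (idealGen S) :=
  isIdeal_sInter fun _ hJ ↦ hJ.1

theorem subset_idealGen (S : Set B) : S ⊆ idealGen S := fun _ hx _ hJ ↦ hJ.2 hx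

theorem mem_idealGen_self (a : B) : a ∈ idealGen {a} := subset_idealGen _ rfl

theorem idealGen_subset (hJ : IsIdeal J) (hS : S ⊆ J) : idealGen S ⊆ J := fun _ hx ↦ hx J ⟨hJ, hS⟩

theorem eq_zero_of_mem_idealGen_zero {a : B} (ha : a ∈ idealGen {0}) : a = 0 :=
  idealGen_subset isIdeal_singleton_zero le_rfl ha

end Basic

namespace IsIdeal

theorem mem_of_nonneg_of_le (hJ : IsIdeal J) {a b : B} (ha : 0 ≤ a) (h : a ≤ b) (hb : b ∈ J) :
    a ∈ J :=
  hJ.closedRightIdeal_subset hb (mem_closedRightIdeal_of_le ha h)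

theorem sqrt_mem (hJ : IsIdeal J) {a : B} (ha : 0 ≤ a) (h : a ∈ J) : CFC.sqrt a ∈ J :=
  hJ.closedRightIdeal_subset h (sqrt_mem_closedRightIdeal_of_le ha le_rfl)

theorem star_mem_of_star_mul_self_mem (hJ : IsIdeal J) {x : B} (h : star x * x ∈ J) : star x ∈ J :=
  hJ.closedRightIdeal_subset h
    (mem_closedRightIdeal_of_mul_star_self_le (by rw [star_star]))

theorem star_mem (hJ : IsIdeal J) {x : B} (hx : x ∈ J) : star x ∈ J :=
  hJ.star_mem_of_star_mul_self_mem (hJ.mul_mem_left _ hx)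

theorem mem_of_star_mul_self_mem (hJ : IsIdeal J) {x : B} (h : star x * x ∈ J) : x ∈ J := by
  simpa only [star_star] using hJ.star_mem (hJ.star_mem_of_star_mul_self_mem h)

theorem mem_of_mul_self_mem (hJ : IsIdeal J) {a : B} (ha : IsSelfAdjoint a) (h : a * a ∈ J) :
    a ∈ J :=
  hJ.mem_of_star_mul_self_mem (by rwa [ha.star_eq])

theorem exists_cutDown_notMem (hJ : IsIdeal J) {a : B} (ha : 0 ≤ a) (haJ : a ∉ J) :
    ∃ ε : ℝ, 0 < ε ∧ cutDown ε a ∉ J := by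
  by_contra! h
  exact haJ (hJ.isClosed.mem_of_tendsto (tendsto_cutDown ha)
    (.of_forall fun n ↦ h _ (by positivity)))

end IsIdeal

theorem star_add_mul_add_le (x y : B) :
    star (x + y) * (x + y) ≤ 2 • (star x * x + star y * y) := by
  have hparallelogram : 2 • (star x * x + star y * y) - star (x + y) * (x + y) =
      star (x - y) * (x - y) := by
    simp only [star_add, star_sub]
    noncomm_ring
  rw [← sub_nonneg, hparallelogram]
  exact star_mul_self_nonneg _

theorem star_mul_mul_le_norm_smul (c x : B) :
    star (c * x) * (c * x) ≤ ‖star c * c‖ • (star x * x) := by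
  simpa only [star_mul, mul_assoc] using
    CStarAlgebra.star_left_conjugate_le_norm_smul (a := x) (b := star c * c) (.star_mul_self c)

theorem isIdeal_setOf_star_mul_self {C : Set B} (hclosed : IsClosed C) (hzero : 0 ∈ C)
    (hadd : ∀ a ∈ C, ∀ b ∈ C, 0 ≤ a → 0 ≤ b → a + b ∈ C)
    (hle : ∀ a, ∀ b ∈ C, 0 ≤ a → a ≤ b → a ∈ C)
    (hconj : ∀ b ∈ C, 0 ≤ b → ∀ z, star z * b * z ∈ C) :
    IsIdeal {x : B | star x * x ∈ C} := by
  have hnsmul (n : ℕ) {b : B} (hb : b ∈ C) (hb0 : 0 ≤ b) : n • b ∈ C := by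
    induction n with
    | zero => simpa
    | succ n ih => rw [succ_nsmul]; exact hadd _ ih _ hb (nsmul_nonneg hb0 n) hb0
  have hsmul (r : ℝ) {a b : B} (hb : b ∈ C) (hb0 : 0 ≤ b) (ha : 0 ≤ a) (h : a ≤ r • b) : a ∈ C := by
    obtain ⟨n, hn⟩ := exists_nat_ge r
    refine hle _ _ (hnsmul n hb hb0) ha (h.trans ?_)
    rw [← Nat.cast_smul_eq_nsmul ℝ]
    gcongr
  refine ⟨Set.subset_univ _, hclosed.preimage (by fun_prop), by simpa, fun x hx y hy ↦ ?_,
    fun c x hx ↦ ?_, fun x hx c _ ↦ ⟨?_, ?_⟩⟩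
  · have hx0 := star_mul_self_nonneg x
    have hy0 := star_mul_self_nonneg y
    exact hle _ _ (hnsmul 2 (hadd _ hx _ hy hx0 hy0) (add_nonneg hx0 hy0)) (star_mul_self_nonneg _)
      (star_add_mul_add_le x y)
  · refine hsmul (‖c‖ ^ 2) hx (star_mul_self_nonneg x) (star_mul_self_nonneg _) (le_of_eq ?_)
    rw [star_smul, smul_mul_smul_comm, Complex.star_def, Complex.conj_mul', ← Complex.ofReal_pow,
      Complex.coe_smul]
  · exact hsmul _ hx (star_mul_self_nonneg x) (star_mul_self_nonneg _)
      (star_mul_mul_le_norm_smul c x)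
  · simpa only [Set.mem_ofPred_eq, star_mul, mul_assoc] using hconj _ hx (star_mul_self_nonneg x) c

end Ideals

section CuntzSubequivalence

omit [PartialOrder B] [StarOrderedRing B] in
theorem cuntzBelow_iff_mem_closure {a b : B} :
    CuntzBelow a b ↔ a ∈ closure (Set.range fun x ↦ star x * b * x) := by
  simp only [CuntzBelow, Metric.mem_closure_range_iff, dist_eq_norm, gt_iff_lt]

namespace CuntzBelow

omit [PartialOrder B] [StarOrderedRing B] in
theorem trans {a b c : B} (hab : CuntzBelow a b) (hbc : CuntzBelow b c) : CuntzBelow a c := by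
  rw [cuntzBelow_iff_mem_closure] at *
  refine closure_minimal ?_ isClosed_closure hab
  rintro _ ⟨x, rfl⟩
  refine map_mem_closure (f := fun y ↦ star x * y * x) (by fun_prop) hbc ?_
  rintro _ ⟨y, rfl⟩
  exact ⟨y * x, by simp only [star_mul, mul_assoc]⟩

omit [PartialOrder B] [StarOrderedRing B] in
theorem mem_of_mem {a b : B} {J : Set B} (h : CuntzBelow a b) (hJ : IsIdeal J) (hb : b ∈ J) :
    a ∈ J := by
  rw [cuntzBelow_iff_mem_closure] at h
  refine closure_minimal ?_ hJ.isClosed h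
  rintro _ ⟨x, rfl⟩
  exact hJ.mul_mem_right _ (hJ.mul_mem_left _ hb)

theorem of_le {a b : B} (ha : 0 ≤ a) (h : a ≤ b) : CuntzBelow a b := by
  have hb : 0 ≤ b := ha.trans h
  have hsqrt := closedRightIdeal_le_sqrt hb (sqrt_mem_closedRightIdeal_of_le ha h)
  rw [cuntzBelow_iff_mem_closure, ← CFC.sqrt_mul_sqrt_self a ha]
  nth_rewrite 1 [← star_sqrt]
  refine map_mem_closure (f := fun z ↦ star z * z) (by fun_prop) hsqrt ?_
  rintro _ ⟨x, rfl⟩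
  refine ⟨x, ?_⟩
  simp only [AddMonoidHom.coe_mulLeft, star_mul, star_sqrt]
  nth_rewrite 1 [← CFC.sqrt_mul_sqrt_self b hb]
  simp only [mul_assoc]

end CuntzBelow

omit [PartialOrder B] [StarOrderedRing B] in
theorem exists_conjugate_sub_smul_eq_cutDown {δ ε : ℝ} (hδ : 0 ≤ δ) (hδε : δ < ε) {a : B}
    (ha : IsSelfAdjoint a) :
    ∃ f : B, IsSelfAdjoint f ∧ f * a * f - δ • (f * f) = cutDown ε a := by
  set φ : ℝ → ℝ := fun t ↦ √(max (t - ε) 0 / max (t - δ) (ε - δ))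
  have hpos (t : ℝ) : 0 < max (t - δ) (ε - δ) := lt_max_of_lt_right (sub_pos.2 hδε)
  have hφ : Continuous φ :=
    Real.continuous_sqrt.comp (.div (by fun_prop) (by fun_prop) fun t ↦ (hpos t).ne')
  have hφ0 : φ 0 = 0 := by simp [φ, (hδ.trans_lt hδε).le]
  have hφeq (t : ℝ) : φ t * t * φ t - δ * (φ t * φ t) = max (t - ε) 0 := by
    have hsq : φ t * φ t = max (t - ε) 0 / max (t - δ) (ε - δ) :=
      Real.mul_self_sqrt (div_nonneg (le_max_right _ _) (hpos t).le)
    rw [mul_right_comm, mul_comm, ← sub_mul, hsq]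
    obtain ht | ht := le_total t ε
    · simp [max_eq_right (sub_nonpos.2 ht)]
    · rw [max_eq_left (sub_le_sub_right ht δ)]
      field_simp [(sub_pos.2 (hδε.trans_le ht)).ne']
  refine ⟨cfcₙ φ a, cfcₙ_predicate (R := ℝ) φ a, ?_⟩
  rw [cutDown, ← funext hφeq, cfcₙ_sub (hf := by fun_prop) (hg := by fun_prop) (hf0 := by simp)
    (hg0 := by simp [hφ0]), cfcₙ_mul (hf := by fun_prop) (hg := by fun_prop),
    cfcₙ_mul (hf := by fun_prop) (hg := by fun_prop), cfcₙ_id' ℝ a,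
    cfcₙ_const_mul δ (fun t ↦ φ t * φ t) a (hf := by fun_prop) (h0 := by simp [hφ0]),
    cfcₙ_mul (hf := by fun_prop) (hg := by fun_prop)]

theorem CuntzBelow.exists_star_mul_self_eq_cutDown {a b : B} (ha : 0 ≤ a) (hb : 0 ≤ b)
    (h : CuntzBelow a b) {ε : ℝ} (hε : 0 < ε) :
    ∃ z ∈ closedRightIdeal b, star z * z = cutDown ε a := by
  obtain ⟨r, hr⟩ := h ε hε
  obtain ⟨f, hf, hcut⟩ := exists_conjugate_sub_smul_eq_cutDown (norm_nonneg _) hr ha.isSelfAdjoint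
  set δ := ‖a - star r * b * r‖
  have hgram : star (CFC.sqrt b * (r * f)) * (CFC.sqrt b * (r * f)) = f * (star r * b * r) * f := by
    nth_rewrite 3 [← CFC.sqrt_mul_sqrt_self b hb]
    simp only [star_mul, star_sqrt, hf.star_eq, mul_assoc]
  have hle : cutDown ε a ≤ star (CFC.sqrt b * (r * f)) * (CFC.sqrt b * (r * f)) := by
    have hdiff : IsSelfAdjoint (a - star r * b * r) :=
      ha.isSelfAdjoint.sub (hb.isSelfAdjoint.conjugate' r)
    have hbound := CStarAlgebra.star_left_conjugate_le_norm_smul (a := f) hdiff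
    rw [hf.star_eq, mul_sub, sub_mul, sub_le_comm] at hbound
    rwa [← hcut, hgram]
  obtain ⟨z, hz, hzz⟩ := exists_star_mul_self_eq_of_le (cutDown_nonneg ε a) hle
  refine ⟨z, closedRightIdeal_le ?_ hz, hzz⟩
  exact closedRightIdeal_mul_mem (sqrt_mem_closedRightIdeal_of_le hb le_rfl) _

end CuntzSubequivalence

section Absorption

/-- The entries `(x* x, y* y, x* y)` of the Gram matrix of the pair `(x, y)`. -/
def gram (p : B × B) : B × B × B := (star p.1 * p.1, star p.2 * p.2, star p.1 * p.2)

/-- `a ⊕ b ≼ a` in the sense of Kirchberg and Rørdam, for `a ≥ 0`: there are asymptotically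
orthogonal `x, y` in `closure (a B)` with `x* x → a` and `y* y → b`. -/
def Absorbs (a b : B) : Prop :=
  (a, b, 0) ∈ closure (gram '' ((closedRightIdeal a : Set B) ×ˢ closedRightIdeal a))

/-- The elements `x` such that `x* x` is absorbed by `a`; for `a ≥ 0` this is an ideal. -/
def absorbedIdeal (a : B) : Set B := {x | Absorbs a (star x * x)}

section Gram

omit [PartialOrder B] [StarOrderedRing B]

theorem continuous_gram : Continuous (gram : B × B → B × B × B) := by
  unfold gram
  fun_prop

theorem closure_gram_image_closedRightIdeal (a : B) :
    closure (gram '' ((closedRightIdeal a : Set B) ×ˢ closedRightIdeal a)) =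
      closure (Set.range fun p : B × B ↦ gram (a * p.1, a * p.2)) := by
  have hrange : Set.range (fun p : B × B ↦ gram (a * p.1, a * p.2)) =
      gram '' (Set.range (a * ·) ×ˢ Set.range (a * ·)) := by
    rw [Set.prod_range_range_eq, ← Set.range_comp]
    rfl
  rw [hrange, ← closure_image_closure (s := Set.range (a * ·) ×ˢ _) continuous_gram,
    closure_prod_eq]
  rfl

theorem isClosed_setOf_absorbs (a : B) : IsClosed {b | Absorbs a b} :=
  isClosed_closure.preimage (f := fun b ↦ ((a, b, 0) : B × B × B)) (by fun_prop)

theorem properlyInfinite_iff_absorbs {a : B} : ProperlyInfinite a ↔ Absorbs a a := by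
  rw [Absorbs, closure_gram_image_closedRightIdeal, Metric.mem_closure_range_iff]
  constructor
  · intro h ε hε
    obtain ⟨_, _, ⟨c, rfl⟩, ⟨d, rfl⟩, h₁, h₂, h₃⟩ := h (ε / 2) (half_pos hε)
    refine ⟨(c, d), lt_of_le_of_lt ?_ (half_lt_self hε)⟩
    rw [dist_comm]
    simp only [gram, Prod.dist_eq]
    simpa only [dist_eq_norm, sub_zero, sup_le_iff] using ⟨h₁, h₂, h₃⟩
  · intro h ε hε
    obtain ⟨⟨c, d⟩, hcd⟩ := h ε hε
    replace hcd := (dist_comm _ _).trans_le hcd.le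
    simp only [gram, Prod.dist_eq] at hcd
    simp only [dist_eq_norm, sub_zero, sup_le_iff] at hcd
    exact ⟨a * c, a * d, ⟨c, rfl⟩, ⟨d, rfl⟩, hcd⟩

end Gram

theorem closure_gram_image_eq_closure_conjugates {a : B} (ha : 0 ≤ a) :
    closure (gram '' ((closedRightIdeal a : Set B) ×ˢ closedRightIdeal a)) =
      closure (Set.range fun p : B × B ↦
        (star p.1 * a * p.1, star p.2 * a * p.2, star p.1 * a * p.2)) := by
  have hsqrt : closedRightIdeal a = closedRightIdeal (CFC.sqrt a) :=
    (closedRightIdeal_le_sqrt ha).antisymm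
      (closedRightIdeal_le (sqrt_mem_closedRightIdeal_of_le ha le_rfl))
  have hconj (x y : B) : star (CFC.sqrt a * x) * (CFC.sqrt a * y) = star x * a * y := by
    nth_rewrite 3 [← CFC.sqrt_mul_sqrt_self a ha]
    simp only [star_mul, star_sqrt, mul_assoc]
  rw [hsqrt, closure_gram_image_closedRightIdeal]
  simp only [gram, hconj]

namespace Absorbs

omit [PartialOrder B] [StarOrderedRing B] in
theorem conjugate {a b : B} (h : Absorbs a b) (z : B) : Absorbs a (star z * b * z) := by
  have hmap := map_mem_closure
    (f := fun q : B × B × B ↦ (q.1, star z * q.2.1 * z, q.2.2 * z))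
    (t := gram '' ((closedRightIdeal a : Set B) ×ˢ closedRightIdeal a)) (by fun_prop) h ?_
  · simpa [Absorbs] using hmap
  · rintro _ ⟨⟨x, y⟩, ⟨hx, hy⟩, rfl⟩
    exact ⟨(x, y * z), ⟨hx, closedRightIdeal_mul_mem hy z⟩, by simp [gram, mul_assoc]⟩

omit [PartialOrder B] [StarOrderedRing B] in
theorem of_cuntzBelow {a b c : B} (h : Absorbs a c) (hbc : CuntzBelow b c) : Absorbs a b := by
  rw [cuntzBelow_iff_mem_closure] at hbc
  refine closure_minimal ?_ (isClosed_setOf_absorbs a) hbc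
  rintro _ ⟨z, rfl⟩
  exact h.conjugate z

theorem zero {a : B} (ha : 0 ≤ a) : Absorbs a 0 :=
  subset_closure ⟨(CFC.sqrt a, 0),
    ⟨sqrt_mem_closedRightIdeal_of_le ha le_rfl, (closedRightIdeal a).zero_mem⟩,
    by simp [gram, star_sqrt, CFC.sqrt_mul_sqrt_self a ha]⟩

/- If `(x, y)` realises `a ⊕ b ≼ a` and `(√a r, √a s)` realises `a ⊕ c ≼ a`, then
`(x r, y + x s)` realises `a ⊕ (b + c) ≼ a`. -/
theorem add {a b c : B} (ha : 0 ≤ a) (hb : Absorbs a b) (hc : Absorbs a c) :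
    Absorbs a (b + c) := by
  set G := gram '' ((closedRightIdeal a : Set B) ×ˢ closedRightIdeal a)
  have hstep (r s : B) : (star r * a * r, b + star s * a * s, star r * a * s) ∈ closure G := by
    have hmap := map_mem_closure (f := fun q : B × B × B ↦ (star r * q.1 * r,
        q.2.1 + star q.2.2 * s + star s * q.2.2 + star s * q.1 * s,
        star r * q.2.2 + star r * q.1 * s))
      (t := G) (by fun_prop) hb ?_
    · simpa using hmap
    · rintro _ ⟨⟨x, y⟩, ⟨hx, hy⟩, rfl⟩
      refine ⟨(x * r, y + x * s), ⟨closedRightIdeal_mul_mem hx r,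
        add_mem hy (closedRightIdeal_mul_mem hx s)⟩, ?_⟩
      simp only [gram, star_add, star_mul, star_star, mul_add, add_mul, mul_assoc, Prod.mk.injEq,
        true_and]
      exact ⟨by abel, trivial⟩
  rw [Absorbs, closure_gram_image_eq_closure_conjugates ha] at hc
  have hmap := map_mem_closure (f := fun q : B × B × B ↦ (q.1, b + q.2.1, q.2.2))
    (t := closure G) (by fun_prop) hc (by rintro _ ⟨⟨r, s⟩, rfl⟩; exact hstep r s)
  rwa [closure_closure] at hmap

end Absorbs

theorem isIdeal_absorbedIdeal {a : B} (ha : 0 ≤ a) : IsIdeal (absorbedIdeal a) :=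
  isIdeal_setOf_star_mul_self (isClosed_setOf_absorbs a) (.zero ha)
    (fun _ hb _ hc _ _ ↦ .add ha hb hc) (fun _ _ hc hb hle ↦ hc.of_cuntzBelow (.of_le hb hle))
    (fun _ hb _ ↦ hb.conjugate)

theorem absorbs_iff_mem_absorbedIdeal {a b : B} (ha : 0 ≤ a) (hb : 0 ≤ b) :
    Absorbs a b ↔ b ∈ absorbedIdeal a := by
  have hJ := isIdeal_absorbedIdeal ha
  have hsqrt : Absorbs a b ↔ CFC.sqrt b ∈ absorbedIdeal a := by
    change _ ↔ Absorbs a _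
    rw [star_sqrt, CFC.sqrt_mul_sqrt_self b hb]
  rw [hsqrt]
  refine ⟨fun h ↦ ?_, hJ.sqrt_mem hb⟩
  simpa only [CFC.sqrt_mul_sqrt_self b hb] using hJ.mul_mem_left (CFC.sqrt b) h

end Absorption

section Commutators

open scoped WithCStarModule

theorem norm_sum_mul_star_sq_le {ι : Type*} (s : Finset ι) (x y : ι → B) :
    ‖∑ i ∈ s, y i * star (x i)‖ ^ 2 ≤
      ‖∑ i ∈ s, x i * star (x i)‖ * ‖∑ i ∈ s, y i * star (y i)‖ := by
  let u (z : ι → B) : C⋆ᵐᵒᵈ(B, Π _ : s, B) := (WithCStarModule.equiv B (Π _ : s, B)).symm (z ·)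
  have hinner (v w : ι → B) : inner B (u v) (u w) = ∑ i ∈ s, w i * star (v i) :=
    Finset.sum_coe_sort s fun i ↦ w i * star (v i)
  have hCS := pow_le_pow_left₀ (norm_nonneg _)
    (CStarModule.norm_inner_le (A := B) C⋆ᵐᵒᵈ(B, Π _ : s, B) (x := u x) (y := u y)) 2
  simpa only [mul_pow, CStarModule.norm_sq_eq B, hinner] using hCS

theorem norm_sum_conjugate_le {ι : Type*} (s : Finset ι) {e z : ι → B} {C : ℝ} (hC : 0 ≤ C)
    (he : ∀ i ∈ s, IsSelfAdjoint (e i)) (hz : ∀ i ∈ s, ‖z i‖ ≤ C) :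
    ‖∑ i ∈ s, e i * z i * e i‖ ≤ C * ‖∑ i ∈ s, e i * e i‖ := by
  have hze : ∑ i ∈ s, star (z i * e i) * (z i * e i) ≤ C ^ 2 • ∑ i ∈ s, e i * e i := by
    rw [Finset.smul_sum]
    refine Finset.sum_le_sum fun i hi ↦ (star_mul_mul_le_norm_smul (z i) (e i)).trans ?_
    rw [(he i hi).star_eq, CStarRing.norm_star_mul_self, ← sq]
    have := hz i hi
    exact smul_le_smul_of_nonneg_right (by gcongr) (he i hi).mul_self_nonneg
  have hnorm_ze := CStarAlgebra.norm_le_norm_of_nonneg_of_le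
    (Finset.sum_nonneg fun i _ ↦ star_mul_self_nonneg (z i * e i)) hze
  rw [norm_smul, Real.norm_of_nonneg (sq_nonneg C)] at hnorm_ze
  have hee : ∑ i ∈ s, e i * star (e i) = ∑ i ∈ s, e i * e i :=
    Finset.sum_congr rfl fun i hi ↦ by rw [(he i hi).star_eq]
  refine le_of_sq_le_sq ?_ (by positivity)
  calc ‖∑ i ∈ s, e i * z i * e i‖ ^ 2
      ≤ ‖∑ i ∈ s, star (z i * e i) * (z i * e i)‖ * ‖∑ i ∈ s, e i * e i‖ := by
        simpa only [star_star, hee, mul_assoc] using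
          norm_sum_mul_star_sq_le s (fun i ↦ star (z i * e i)) e
    _ ≤ (C ^ 2 * ‖∑ i ∈ s, e i * e i‖) * ‖∑ i ∈ s, e i * e i‖ := by gcongr
    _ = (C * ‖∑ i ∈ s, e i * e i‖) ^ 2 := by ring

/-- The function vanishing for `t ≤ k`, equal to `t - k` on `[k, k + 1]` and to `1` afterwards;
`clip` feeds it to the functional calculus to cut an operator into pieces of bounded overlap. -/
noncomputable def clipFun (k : ℕ) (t : ℝ) : ℝ := min (max (t - k) 0) 1

@[fun_prop]
theorem continuous_clipFun (k : ℕ) : Continuous (clipFun k) := by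
  unfold clipFun
  fun_prop

theorem clipFun_eq_zero {k : ℕ} {t : ℝ} (h : t ≤ k) : clipFun k t = 0 := by
  simp [clipFun, h]

theorem clipFun_eq_one {k : ℕ} {t : ℝ} (h : k + 1 ≤ t) : clipFun k t = 1 :=
  min_eq_right (le_max_of_le_left (by linarith))

@[simp]
theorem clipFun_zero (k : ℕ) : clipFun k 0 = 0 := clipFun_eq_zero k.cast_nonneg

theorem clipFun_nonneg (k : ℕ) (t : ℝ) : 0 ≤ clipFun k t := le_min (le_max_right _ _) zero_le_one

theorem clipFun_le_one (k : ℕ) (t : ℝ) : clipFun k t ≤ 1 := min_le_right _ _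

theorem clipFun_anti (t : ℝ) : Antitone (clipFun · t) := fun k l hkl ↦ by
  dsimp only [clipFun]
  gcongr

theorem clipFun_mul_succ (k : ℕ) (t : ℝ) :
    clipFun k t * clipFun (k + 1) t = clipFun (k + 1) t := by
  rcases le_total t ((k + 1 : ℕ) : ℝ) with h | h
  · rw [clipFun_eq_zero h, mul_zero]
  · rw [clipFun_eq_one (k := k) (by exact_mod_cast h), one_mul]

theorem sum_range_clipFun {t : ℝ} (ht : 0 ≤ t) (n : ℕ) :
    ∑ k ∈ Finset.range n, clipFun k t = min t n := by
  induction n with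
  | zero => simp [ht]
  | succ n ih =>
    rw [Finset.sum_range_succ, ih, clipFun]
    push_cast
    grind

theorem sum_range_clipFun_sub_sq_le (t : ℝ) (n : ℕ) :
    ∑ j ∈ Finset.range n, (clipFun j t - clipFun (j + 2) t) ^ 2 ≤ 2 := by
  have htelescope : ∑ j ∈ Finset.range n, (clipFun j t - clipFun (j + 2) t) =
      clipFun 0 t + clipFun 1 t - clipFun n t - clipFun (n + 1) t := by
    induction n with
    | zero => simp
    | succ n ih => rw [Finset.sum_range_succ, ih]; ring
  calc ∑ j ∈ Finset.range n, (clipFun j t - clipFun (j + 2) t) ^ 2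
      ≤ ∑ j ∈ Finset.range n, (clipFun j t - clipFun (j + 2) t) :=
        Finset.sum_le_sum fun j _ ↦ pow_le_of_le_one
          (sub_nonneg.2 (clipFun_anti t (Nat.le_add_right j 2)))
          (by linarith [clipFun_le_one j t, clipFun_nonneg (j + 2) t]) two_ne_zero
    _ ≤ 2 := by
      linarith [clipFun_le_one 0 t, clipFun_le_one 1 t, clipFun_nonneg n t,
        clipFun_nonneg (n + 1) t]

section Clip

omit [PartialOrder B] [StarOrderedRing B]

/-- The part `clipFun k h` of `h` lying between the heights `k` and `k + 1`. -/
noncomputable def clip (k : ℕ) (h : B) : B := cfcₙ (clipFun k) h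

theorem isSelfAdjoint_clip (k : ℕ) (h : B) : IsSelfAdjoint (clip k h) := cfcₙ_predicate _ _

theorem norm_clip_le (k : ℕ) (h : B) : ‖clip k h‖ ≤ 1 :=
  norm_cfcₙ_le fun t _ ↦ by
    rw [Real.norm_of_nonneg (clipFun_nonneg k t)]
    exact clipFun_le_one k t

theorem clip_mul_clip_succ (k : ℕ) (h : B) : clip k h * clip (k + 1) h = clip (k + 1) h := by
  rw [clip, clip, ← cfcₙ_mul (clipFun k) (clipFun (k + 1)) h]
  exact cfcₙ_congr fun t _ ↦ clipFun_mul_succ k t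

theorem norm_sum_range_clip_sub_mul_self_le (h : B) (n : ℕ) :
    ‖∑ j ∈ Finset.range n, (clip j h - clip (j + 2) h) * (clip j h - clip (j + 2) h)‖ ≤ 2 := by
  have hcfc (j : ℕ) : (clip j h - clip (j + 2) h) * (clip j h - clip (j + 2) h) =
      cfcₙ (fun t ↦ (clipFun j t - clipFun (j + 2) t) ^ 2) h := by
    simp only [sq]
    rw [cfcₙ_mul (fun t ↦ clipFun j t - clipFun (j + 2) t) _ h (by fun_prop) (by simp)
      (by fun_prop) (by simp), cfcₙ_sub (clipFun j) (clipFun (j + 2)) h]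
    rfl
  simp only [hcfc]
  rw [← cfcₙ_sum _ _ _ (fun j _ ↦ by fun_prop) fun j _ ↦ by simp]
  refine norm_cfcₙ_le fun t _ ↦ ?_
  rw [Finset.sum_apply, Real.norm_of_nonneg (Finset.sum_nonneg fun j _ ↦ sq_nonneg _)]
  exact sum_range_clipFun_sub_sq_le t n

end Clip

theorem sum_range_clip {h : B} (hh : 0 ≤ h) {n : ℕ} (hn : ‖h‖ ≤ n) :
    ∑ k ∈ Finset.range n, clip k h = h := by
  unfold clip
  rw [← cfcₙ_sum _ _ _ (fun k _ ↦ (continuous_clipFun k).continuousOn) fun k _ ↦ clipFun_zero k]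
  conv_rhs => rw [← cfcₙ_id' ℝ h]
  refine cfcₙ_congr fun t ht ↦ ?_
  have htn : t ≤ n := (le_abs_self t).trans
    ((NonUnitalIsometricContinuousFunctionalCalculus.norm_quasispectrum_le h ht).trans hn)
  rw [Finset.sum_apply, sum_range_clipFun (quasispectrum_nonneg_of_nonneg h hh t ht),
    min_eq_left htn]

omit [PartialOrder B] [StarOrderedRing B] in
theorem IsIdeal.mem_of_forall_norm_nsmul_sub_le {J : Set B} (hJ : IsIdeal J) {x : B} {C : ℝ}
    (h : ∀ n : ℕ, ∃ v ∈ J, ‖n • x - v‖ ≤ C) : x ∈ J := by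
  rw [← hJ.isClosed.closure_eq, Metric.mem_closure_iff]
  intro ε hε
  obtain ⟨n, hn⟩ := exists_nat_gt (C / ε)
  obtain ⟨v, hv, hnv⟩ := h n
  have hn0 : (0 : ℝ) < n := (div_nonneg ((norm_nonneg _).trans hnv) hε.le).trans_lt hn
  refine ⟨(n : ℂ)⁻¹ • v, hJ.smul_mem _ hv, ?_⟩
  have hscale : x - (n : ℂ)⁻¹ • v = (n : ℂ)⁻¹ • (n • x - v) := by
    rw [smul_sub, ← Nat.cast_smul_eq_nsmul ℂ, inv_smul_smul₀ (by exact_mod_cast hn0.ne')]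
  rw [dist_eq_norm, hscale, norm_smul, norm_inv, Complex.norm_natCast, inv_mul_lt_iff₀ hn0]
  exact hnv.trans_lt ((div_lt_iff₀ hε).1 hn)

section SquareZero

variable {J K : Set B}

omit [PartialOrder B] [StarOrderedRing B] in
theorem lie_sub_mul_lie_mem (hJ : IsIdeal J) (hK : IsIdeal K)
    (hsq : ∀ x ∈ K, x * x = 0 → x ∈ J) {a b c y : B} (hy : y ∈ K)
    (hab : a * b = b) (hba : b * a = b) (hbc : b * c = c) (hcb : c * b = c) :
    ⁅b, y⁆ - (a - c) * ⁅b, y⁆ ∈ J := by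
  have hb : y * b - a * y * b ∈ J := by
    refine hsq _ (hK.sub_mem (hK.mul_mem_right _ hy)
      (hK.mul_mem_right _ (hK.mul_mem_left _ hy))) ?_
    have hfactor : (y * b - a * y * b) * (y * b - a * y * b) =
        y * (b - b * a) * y * b - a * y * (b - b * a) * y * b := by noncomm_ring
    simp [hfactor, hba]
  have hc : c * y - c * y * b ∈ J := by
    refine hsq _ (hK.sub_mem (hK.mul_mem_left _ hy)
      (hK.mul_mem_right _ (hK.mul_mem_left _ hy))) ?_
    have hfactor : (c * y - c * y * b) * (c * y - c * y * b) =
        c * y * (c - b * c) * y - c * y * (c - b * c) * y * b := by noncomm_ring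
    simp [hfactor, hbc]
  have hsplit : ⁅b, y⁆ - (a - c) * ⁅b, y⁆ = (c * y - c * y * b) - (y * b - a * y * b) +
      ((b - a * b) * y - (c - c * b) * y) := by
    rw [Ring.lie_def]
    noncomm_ring
  rw [hsplit, hab, hcb]
  simpa using hJ.sub_mem hc hb

theorem lie_sub_conjugate_mem (hJ : IsIdeal J) (hK : IsIdeal K)
    (hsq : ∀ x ∈ K, x * x = 0 → x ∈ J) {a b c y : B} (hy : y ∈ K) (ha : IsSelfAdjoint a)
    (hb : IsSelfAdjoint b) (hc : IsSelfAdjoint c) (hab : a * b = b) (hbc : b * c = c) :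
    ⁅b, y⁆ - (a - c) * ⁅b, y⁆ * (a - c) ∈ J := by
  have hba : b * a = b := by simpa [ha.star_eq, hb.star_eq] using congrArg star hab
  have hcb : c * b = c := by simpa [hb.star_eq, hc.star_eq] using congrArg star hbc
  have hleft (x : B) (hx : x ∈ K) := lie_sub_mul_lie_mem hJ hK hsq hx hab hba hbc hcb
  have hright := hJ.star_mem (hleft (star y) (hK.star_mem hy))
  have hsplit : ⁅b, y⁆ - (a - c) * ⁅b, y⁆ * (a - c) = (⁅b, y⁆ - (a - c) * ⁅b, y⁆) -
      (a - c) * star (⁅b, star y⁆ - (a - c) * ⁅b, star y⁆) := by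
    simp only [Ring.lie_def, star_sub, star_mul, star_star, ha.star_eq, hb.star_eq, hc.star_eq]
    noncomm_ring
  rw [hsplit]
  exact hJ.sub_mem (hleft y hy) (hJ.mul_mem_left _ hright)

theorem exists_norm_lie_sub_le (hJ : IsIdeal J) (hK : IsIdeal K)
    (hsq : ∀ x ∈ K, x * x = 0 → x ∈ J) {h y : B} (hh : 0 ≤ h) (hy : y ∈ K) :
    ∃ v ∈ J, ‖⁅h, y⁆ - v‖ ≤ 6 * ‖y‖ := by
  obtain ⟨N, hN⟩ := exists_nat_ge ‖h‖
  let w (k : ℕ) : B := ⁅clip k h, y⁆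
  let e (j : ℕ) : B := clip j h - clip (j + 2) h
  have hw_norm (k : ℕ) : ‖w k‖ ≤ 2 * ‖y‖ := by
    have hky : ‖clip k h * y‖ ≤ ‖y‖ :=
      (norm_mul_le _ _).trans (mul_le_of_le_one_left (norm_nonneg y) (norm_clip_le k h))
    have hyk : ‖y * clip k h‖ ≤ ‖y‖ :=
      (norm_mul_le _ _).trans (mul_le_of_le_one_right (norm_nonneg y) (norm_clip_le k h))
    calc ‖w k‖ ≤ ‖clip k h * y‖ + ‖y * clip k h‖ := norm_sub_le _ _
      _ ≤ 2 * ‖y‖ := by linarith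
  have hlie : ⁅h, y⁆ = ∑ j ∈ Finset.range N, w (j + 1) + w 0 := by
    rw [← Finset.sum_range_succ' w]
    simp only [w, Ring.lie_def, Finset.sum_sub_distrib, ← Finset.sum_mul, ← Finset.mul_sum]
    rw [sum_range_clip hh (hN.trans (by exact_mod_cast N.le_succ))]
  refine ⟨∑ j ∈ Finset.range N, (w (j + 1) - e j * w (j + 1) * e j),
    hJ.sum_mem fun j _ ↦ lie_sub_conjugate_mem hJ hK hsq hy (isSelfAdjoint_clip j h)
      (isSelfAdjoint_clip (j + 1) h) (isSelfAdjoint_clip (j + 2) h) (clip_mul_clip_succ j h)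
      (clip_mul_clip_succ (j + 1) h), ?_⟩
  calc ‖⁅h, y⁆ - ∑ j ∈ Finset.range N, (w (j + 1) - e j * w (j + 1) * e j)‖
      = ‖w 0 + ∑ j ∈ Finset.range N, e j * w (j + 1) * e j‖ := by
        rw [hlie, Finset.sum_sub_distrib]
        congr 1
        abel
    _ ≤ ‖w 0‖ + 2 * ‖y‖ * ‖∑ j ∈ Finset.range N, e j * e j‖ :=
        norm_add_le_of_le le_rfl (norm_sum_conjugate_le _ (by positivity)
          (fun j _ ↦ (isSelfAdjoint_clip j h).sub (isSelfAdjoint_clip (j + 2) h))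
          fun j _ ↦ hw_norm (j + 1))
    _ ≤ 2 * ‖y‖ + 2 * ‖y‖ * 2 := by
        gcongr
        exacts [hw_norm 0, norm_sum_range_clip_sub_mul_self_le h N]
    _ = 6 * ‖y‖ := by ring

theorem lie_mem_of_forall_sq_eq_zero (hJ : IsIdeal J) (hK : IsIdeal K)
    (hsq : ∀ x ∈ K, x * x = 0 → x ∈ J) (x : B) {y : B} (hy : y ∈ K) : ⁅x, y⁆ ∈ J := by
  have hx : x ∈ Submodule.span ℂ {h : B | 0 ≤ h} := by simp [CStarAlgebra.span_nonneg]
  induction hx using Submodule.span_induction with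
  | mem h hh =>
    refine hJ.mem_of_forall_norm_nsmul_sub_le (C := 6 * ‖y‖) fun n ↦ ?_
    rw [Ring.lie_def, smul_sub, ← smul_mul_assoc, ← mul_smul_comm]
    exact exists_norm_lie_sub_le hJ hK hsq (nsmul_nonneg hh n) hy
  | zero => simpa [Ring.lie_def] using hJ.zero_mem
  | add u v _ _ hu hv =>
    rw [Ring.lie_def, add_mul, mul_add, add_sub_add_comm]
    exact hJ.add_mem hu hv
  | smul c u _ hu =>
    rw [Ring.lie_def, smul_mul_assoc, mul_smul_comm, ← smul_sub]
    exact hJ.smul_mem c hu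

end SquareZero

end Commutators

section CommutativeQuotient

variable {U : Type*} [NormedRing U]

theorem norm_quotient_mul_le (I : Ideal U) [I.IsTwoSided] (x y : U ⧸ I) : ‖x * y‖ ≤ ‖x‖ * ‖y‖ := by
  have hbound : ∀ ε > 0, ‖x * y‖ ≤ (‖x‖ + ε) * (‖y‖ + ε) := fun ε hε ↦ by
    obtain ⟨a, rfl, ha⟩ := Submodule.Quotient.norm_mk_lt x hε
    obtain ⟨b, rfl, hb⟩ := Submodule.Quotient.norm_mk_lt y hε
    calc ‖Submodule.Quotient.mk (p := I) (a * b)‖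
        ≤ ‖a‖ * ‖b‖ := (Submodule.Quotient.norm_mk_le I _).trans (norm_mul_le a b)
      _ ≤ _ := by gcongr
  have hlim : Tendsto (fun ε : ℝ ↦ (‖x‖ + ε) * (‖y‖ + ε)) (𝓝[>] 0) (𝓝 (‖x‖ * ‖y‖)) := by
    have hcont : Continuous fun ε : ℝ ↦ (‖x‖ + ε) * (‖y‖ + ε) := by fun_prop
    simpa using (hcont.tendsto 0).mono_left nhdsWithin_le_nhds
  exact ge_of_tendsto hlim (eventually_mem_nhdsWithin.mono hbound)

theorem exists_algHom_apply_eq_zero [NormedAlgebra ℂ U] [CompleteSpace U] (I : Ideal U)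
    [I.IsTwoSided] (hI : IsClosed (I : Set U)) (hcomm : ∀ x y : U, ⁅x, y⁆ ∈ I) {p q : U}
    (hp : p ∉ I) (hqp : q * p ∈ I) : ∃ χ : U →ₐ[ℂ] ℂ, χ q = 0 := by
  have := hI
  have : IsClosed (I.toAddSubgroup : Set U) := hI
  let : NormedAddCommGroup (U ⧸ I) := Submodule.Quotient.normedAddCommGroup I
  let : NormedCommRing (U ⧸ I) :=
    { Ideal.Quotient.ring I, Submodule.Quotient.normedAddCommGroup I with
      mul_comm := by
        rintro ⟨x⟩ ⟨y⟩
        exact Ideal.Quotient.eq.2 (hcomm x y)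
      norm_mul_le := norm_quotient_mul_le I }
  let : NormedAlgebra ℂ (U ⧸ I) :=
    { Submodule.Quotient.normedSpace I ℂ, Ideal.Quotient.algebra ℂ with }
  have : CompleteSpace (U ⧸ I) := QuotientAddGroup.completeSpace_left _ _
  let π : U →ₐ[ℂ] U ⧸ I := Ideal.Quotient.mkₐ ℂ I
  have hπ (u : U) : π u = 0 ↔ u ∈ I := Ideal.Quotient.eq_zero_iff_mem
  have hq : ¬ IsUnit (π q) := fun hq ↦
    hp ((hπ p).1 (hq.mul_right_eq_zero.1 (by rw [← map_mul, hπ]; exact hqp)))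
  obtain ⟨f, hf⟩ := WeakDual.CharacterSpace.exists_apply_eq_zero hq
  exact ⟨(WeakDual.CharacterSpace.toAlgHom f).comp π, hf⟩

section Unitization

omit [PartialOrder B] [StarOrderedRing B]

/-- An ideal of `B`, regarded as an ideal of the unitization of `B`. -/
def IsIdeal.toUnitization {N : Set B} (hN : IsIdeal N) : Ideal (Unitization ℂ B) where
  carrier := (fun b : B ↦ (b : Unitization ℂ B)) '' N
  zero_mem' := ⟨0, hN.zero_mem, by simp⟩
  add_mem' := by
    rintro _ _ ⟨a, ha, rfl⟩ ⟨b, hb, rfl⟩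
    exact ⟨a + b, hN.add_mem ha hb, by simp⟩
  smul_mem' := by
    rintro c _ ⟨b, hb, rfl⟩
    induction c using Unitization.ind with
    | inl_add_inr r a =>
      refine ⟨r • b + a * b, hN.add_mem (hN.smul_mem _ hb) (hN.mul_mem_left _ hb), ?_⟩
      simp [add_mul, Unitization.inl_mul_inr]

instance IsIdeal.isTwoSided_toUnitization {N : Set B} (hN : IsIdeal N) :
    hN.toUnitization.IsTwoSided where
  mul_mem_of_left := by
    rintro _ c ⟨b, hb, rfl⟩
    induction c using Unitization.ind with
    | inl_add_inr r a =>
      refine ⟨r • b + b * a, hN.add_mem (hN.smul_mem _ hb) (hN.mul_mem_right _ hb), ?_⟩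
      simp [mul_add, Unitization.inr_mul_inl]

theorem IsIdeal.inr_mem_toUnitization {N : Set B} (hN : IsIdeal N) {b : B} :
    (b : Unitization ℂ B) ∈ hN.toUnitization ↔ b ∈ N :=
  Unitization.inr_injective.mem_set_image

theorem IsIdeal.isClosed_toUnitization {N : Set B} (hN : IsIdeal N) :
    IsClosed (hN.toUnitization : Set (Unitization ℂ B)) :=
  (Unitization.isometry_inr (𝕜 := ℂ) (A := B)).isClosedEmbedding.isClosedMap _ hN.isClosed

theorem lie_eq_inr_lie_snd (u v : Unitization ℂ B) :
    ⁅u, v⁆ = (⁅u.snd, v.snd⁆ : B) := by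
  rw [Ring.lie_def, sub_eq_iff_eq_add]
  ext
  · simp only [Unitization.fst_mul, Unitization.fst_add, Unitization.fst_inr, zero_add, mul_comm]
  · simp only [Unitization.snd_mul, Unitization.snd_add, Unitization.snd_inr, Ring.lie_def]
    abel

end Unitization

theorem exists_isCharacter {N : Set B} (hN : IsIdeal N) (hcomm : ∀ x y : B, ⁅x, y⁆ ∈ N) {x : B}
    (hx : x ∉ N) : ∃ φ : B →ₗ[ℂ] ℂ, IsCharacter φ := by
  obtain ⟨ε, hε, hp⟩ := hN.exists_cutDown_notMem (star_mul_self_nonneg x)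
    (mt hN.mem_of_star_mul_self_mem hx)
  obtain ⟨χ, hχ⟩ := exists_algHom_apply_eq_zero hN.toUnitization hN.isClosed_toUnitization
    (fun u v ↦ by rw [lie_eq_inr_lie_snd, hN.inr_mem_toUnitization]; exact hcomm _ _)
    (p := (cutDown ε (star x * x) : B)) (q := 1 - (localUnit ε (star x * x) : B))
    (by rwa [hN.inr_mem_toUnitization])
    (by
      rw [sub_mul, one_mul, ← Unitization.inr_mul, localUnit_mul_cutDown hε, sub_self]
      exact zero_mem _)
  refine ⟨χ.toLinearMap.comp (Unitization.inrHom ℂ ℂ B), fun a b ↦ by simp, fun h₀ ↦ ?_⟩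
  have hχg : χ (localUnit ε (star x * x) : B) = 0 := LinearMap.congr_fun h₀ _
  simp [hχg] at hχ

end CommutativeQuotient

section PurelyInfiniteImpliesProperlyInfinite

/-- The elements annihilated modulo `J` by left multiplication with `K`; for ideals `J` and `K`
this is an ideal. -/
def idealQuotient (J K : Set B) : Set B := {x | ∀ k ∈ K, k * x ∈ J}

omit [PartialOrder B] [StarOrderedRing B] in
theorem isIdeal_idealQuotient {J K : Set B} (hJ : IsIdeal J) (hK : IsIdeal K) :
    IsIdeal (idealQuotient J K) := by
  refine ⟨Set.subset_univ _, ?_, fun k _ ↦ by simpa using hJ.zero_mem,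
    fun x hx y hy k hk ↦ by simpa only [mul_add] using hJ.add_mem (hx k hk) (hy k hk),
    fun c x hx k hk ↦ by simpa only [mul_smul_comm] using hJ.smul_mem c (hx k hk),
    fun x hx c _ ↦ ⟨fun k hk ↦ ?_, fun k hk ↦ ?_⟩⟩
  · have hinter : idealQuotient J K = ⋂ k ∈ K, (k * ·) ⁻¹' J := by ext; simp [idealQuotient]
    rw [hinter]
    exact isClosed_biInter fun k _ ↦ hJ.isClosed.preimage (continuous_const_mul k)
  · simpa only [mul_assoc] using hx (k * c) (hK.mul_mem_right c hk)
  · simpa only [mul_assoc] using hJ.mul_mem_right c (hx k hk)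

omit [PartialOrder B] [StarOrderedRing B] in
theorem lie_mem_idealQuotient {J K : Set B} (hJ : IsIdeal J) (hK : IsIdeal K)
    (hlie : ∀ x : B, ∀ y ∈ K, ⁅x, y⁆ ∈ J) (x y : B) : ⁅x, y⁆ ∈ idealQuotient J K := by
  intro k hk
  have hleibniz : k * ⁅x, y⁆ = ⁅y, k⁆ * x - ⁅y, k * x⁆ := by
    simp only [Ring.lie_def]
    noncomm_ring
  rw [hleibniz]
  exact hJ.sub_mem (hJ.mul_mem_right x (hlie y k hk)) (hlie y _ (hK.mul_mem_right x hk))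

theorem subset_of_forall_sq_eq_zero (hchar : ¬∃ φ : B →ₗ[ℂ] ℂ, IsCharacter φ) {J K : Set B}
    (hJ : IsIdeal J) (hK : IsIdeal K) (hsq : ∀ x ∈ K, x * x = 0 → x ∈ J) : K ⊆ J := by
  have hlie (x : B) : ∀ y ∈ K, ⁅x, y⁆ ∈ J := fun _ ↦ lie_mem_of_forall_sq_eq_zero hJ hK hsq x
  intro x hx
  have hxN : x ∈ idealQuotient J K := by
    by_contra hxN
    exact hchar (exists_isCharacter (isIdeal_idealQuotient hJ hK)
      (lie_mem_idealQuotient hJ hK hlie) hxN)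
  exact hJ.mem_of_star_mul_self_mem (hxN _ (hK.star_mem hx))

omit [StarOrderedRing B] in
theorem PurelyInfinite.cuntzBelow (hB : PurelyInfinite B) {a b : B} (ha : 0 ≤ a) (hb : 0 ≤ b)
    (h : a ∈ idealGen {b}) : CuntzBelow a b := by
  rcases eq_or_ne a 0 with rfl | ha₀
  · exact fun ε hε ↦ ⟨0, by simpa using hε⟩
  rcases eq_or_ne b 0 with rfl | hb₀
  · exact absurd (eq_zero_of_mem_idealGen_zero h) ha₀
  exact (hB.2 a b ha ha₀ hb hb₀).2 h

omit [PartialOrder B] [StarOrderedRing B] in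
theorem mem_absorbedIdeal_of_cuntzBelow {a v y : B} (hv : v ∈ closedRightIdeal a)
    (hy : y ∈ closedRightIdeal a) (hvy : star v * y = 0) (h : CuntzBelow a (star v * v)) :
    y ∈ absorbedIdeal a := by
  rw [cuntzBelow_iff_mem_closure] at h
  refine map_mem_closure (f := fun q ↦ (q, star y * y, 0)) (by fun_prop) h ?_
  rintro _ ⟨r, rfl⟩
  exact ⟨(v * r, y), ⟨closedRightIdeal_mul_mem hv r, hy⟩, by simp [gram, mul_assoc, hvy]⟩

theorem mem_of_mul_eq_zero_of_sqrt_sub_mem {a g x : B} {K : Set B} (hK : IsIdeal K) (ha : 0 ≤ a)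
    (hv : CFC.sqrt a - g * CFC.sqrt a ∈ K) (hx : x ∈ closedRightIdeal a) (hgx : g * x = 0) :
    x ∈ K := by
  have hmap := map_mem_closure (f := fun y ↦ y - g * y) (t := K) (by fun_prop)
    (closedRightIdeal_le_sqrt ha hx) (by
      rintro _ ⟨c, rfl⟩
      simpa only [sub_mul, mul_assoc, AddMonoidHom.coe_mulLeft] using hK.mul_mem_right c hv)
  simpa only [hgx, sub_zero, hK.isClosed.closure_eq] using hmap

/- With `g` a local unit of `x* x`, the element `v = √a - g √a` is orthogonal to a cut-down of
`x* x`, while the ideal it generates contains first `x`, then `g`, then `a`: so `a ≼ v* v` leaves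
room for that cut-down beside `a`. -/
theorem mem_absorbedIdeal_of_mem_closedRightIdeal (hB : PurelyInfinite B) {a x : B} (ha : 0 ≤ a)
    (hx : x ∈ closedRightIdeal a) (hx' : star x ∈ closedRightIdeal a) (hxx : x * x = 0) :
    x ∈ absorbedIdeal a := by
  have hJ := isIdeal_absorbedIdeal ha
  by_contra hxJ
  obtain ⟨ε, hε, hφJ⟩ := hJ.exists_cutDown_notMem (star_mul_self_nonneg x)
    (mt hJ.mem_of_star_mul_self_mem hxJ)
  set φ := cutDown ε (star x * x)
  set g := localUnit ε (star x * x)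
  set v := CFC.sqrt a - g * CFC.sqrt a with hv
  have hg_sa : star g = g := isSelfAdjoint_localUnit ε _
  have hgφ : g * φ = φ := localUnit_mul_cutDown hε _
  obtain ⟨f, hgf⟩ : ∃ f, g = star x * (x * f) :=
    ⟨_, (localUnit_eq_mul hε (.star_mul_self x)).trans (mul_assoc _ _ _)⟩
  have hgx : g * x = 0 := by
    have hxx' : star x * star x = 0 := by rw [← star_mul, hxx, star_zero]
    rw [← star_eq_zero, star_mul, hg_sa, hgf, ← mul_assoc, hxx', zero_mul]
  have hgR : g ∈ closedRightIdeal a := hgf ▸ closedRightIdeal_mul_mem hx' _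
  have hvR : v ∈ closedRightIdeal a :=
    sub_mem (sqrt_mem_closedRightIdeal_of_le ha le_rfl) (closedRightIdeal_mul_mem hgR _)
  have hφR : φ ∈ closedRightIdeal a := hgφ ▸ closedRightIdeal_mul_mem hgR φ
  have hvφ : star v * φ = 0 := by
    rw [hv, star_sub, star_mul, star_sqrt, hg_sa, sub_mul, mul_assoc, hgφ, sub_self]
  have hK := isIdeal_idealGen {star v * v}
  have hvK : v ∈ idealGen {star v * v} := hK.mem_of_star_mul_self_mem (mem_idealGen_self _)
  have hxK := mem_of_mul_eq_zero_of_sqrt_sub_mem hK ha hvK hx hgx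
  have hsqrtK : CFC.sqrt a ∈ idealGen {star v * v} := by
    have hgK : g ∈ idealGen {star v * v} :=
      hgf ▸ hK.mul_mem_left (star x) (hK.mul_mem_right f hxK)
    simpa [hv] using hK.add_mem hvK (hK.mul_mem_right (CFC.sqrt a) hgK)
  have haK : a ∈ idealGen {star v * v} := by
    simpa only [CFC.sqrt_mul_sqrt_self a ha] using hK.mul_mem_left (CFC.sqrt a) hsqrtK
  exact hφJ (mem_absorbedIdeal_of_cuntzBelow hvR hφR hvφ
    (hB.cuntzBelow ha (star_mul_self_nonneg v) haK))

theorem cutDown_mul_mul_cutDown_mem_absorbedIdeal (hB : PurelyInfinite B) {a m x : B}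
    (ha : 0 ≤ a) (hm : 0 ≤ m) (hma : CuntzBelow m a) (hmx : Commute m x) (hxx : x * x = 0) {ε : ℝ}
    (hε : 0 < ε) : cutDown ε m * x * cutDown ε m ∈ absorbedIdeal a := by
  have hJ := isIdeal_absorbedIdeal ha
  obtain ⟨t, ht, htt⟩ := hma.exists_star_mul_self_eq_cutDown hm ha hε
  have hcomm : Commute (cutDown ε m) x := commute_cutDown ε hmx
  have htxt : t * x * star t ∈ absorbedIdeal a := by
    refine mem_absorbedIdeal_of_mem_closedRightIdeal hB ha
      (mul_assoc t x _ ▸ closedRightIdeal_mul_mem ht _) ?_ ?_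
    · rw [star_mul, star_star]
      exact closedRightIdeal_mul_mem ht _
    · calc t * x * star t * (t * x * star t) = t * (x * (star t * t)) * x * star t := by
            noncomm_ring
        _ = 0 := by rw [htt, ← hcomm.eq, mul_assoc t, mul_assoc _ x, hxx]; simp
  rw [← htt, show star t * t * x * (star t * t) = star t * (t * x * star t) * t by noncomm_ring]
  exact hJ.mul_mem_right t (hJ.mul_mem_left _ htxt)

theorem mem_absorbedIdeal_of_sq_eq_zero (hB : PurelyInfinite B) {a x : B} (ha : 0 ≤ a)
    (hx : x ∈ idealGen {a}) (hxx : x * x = 0) : x ∈ absorbedIdeal a := by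
  have hJ := isIdeal_absorbedIdeal ha
  have hK := isIdeal_idealGen ({a} : Set B)
  set m := star x * x + x * star x with hm
  have hm₀ : 0 ≤ m := add_nonneg (star_mul_self_nonneg x) (mul_star_self_nonneg x)
  have hma : CuntzBelow m a :=
    hB.cuntzBelow hm₀ ha (hK.add_mem (hK.mul_mem_left _ hx) (hK.mul_mem_right _ hx))
  have hxm : x * m = x * star x * x := by rw [hm, mul_add, ← mul_assoc, ← mul_assoc, hxx]; simp
  have hmx : m * x = x * star x * x := by rw [hm, add_mul, mul_assoc, hxx]; simp
  have hmxm : m * x * m ∈ absorbedIdeal a :=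
    hJ.isClosed.mem_of_tendsto (((tendsto_cutDown hm₀).mul_const x).mul (tendsto_cutDown hm₀))
      (.of_forall fun n ↦ cutDown_mul_mul_cutDown_mem_absorbedIdeal hB ha hm₀ hma
        (hmx.trans hxm.symm) hxx (by positivity))
  set c := star x * x with hc
  have hcube : star x * (m * x * m) = c * c * c := by
    rw [mul_assoc m, hxm, ← mul_assoc m, ← mul_assoc m, hmx]
    simp only [hc, mul_assoc]
  refine hJ.mem_of_star_mul_self_mem (hJ.mem_of_mul_self_mem (.star_mul_self x)
    (hJ.mem_of_mul_self_mem (by simp [IsSelfAdjoint, mul_assoc]) ?_))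
  rw [← mul_assoc, ← hcube]
  exact hJ.mul_mem_right c (hJ.mul_mem_left _ hmxm)

theorem PurelyInfinite.properlyInfinite (hB : PurelyInfinite B) {a : B} (ha : 0 ≤ a) :
    ProperlyInfinite a := by
  rw [properlyInfinite_iff_absorbs, absorbs_iff_mem_absorbedIdeal ha ha]
  exact subset_of_forall_sq_eq_zero hB.1 (isIdeal_absorbedIdeal ha) (isIdeal_idealGen {a})
    (fun _ ↦ mem_absorbedIdeal_of_sq_eq_zero hB ha) (mem_idealGen_self a)

end PurelyInfiniteImpliesProperlyInfinite

section Subalgebras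

omit [PartialOrder B] [StarOrderedRing B]

namespace IsSubCStar

variable {A : Set B}

/-- The bundled non-unital star subalgebra carried by `A`. -/
def toNonUnitalStarSubalgebra (hA : IsSubCStar A) : NonUnitalStarSubalgebra ℂ B where
  carrier := A
  zero_mem' := hA.2.1
  add_mem' hx hy := hA.2.2.1 _ hx _ hy
  smul_mem' c _ hx := hA.2.2.2.1 c _ hx
  mul_mem' hx hy := hA.2.2.2.2.1 _ hx _ hy
  star_mem' hx := hA.2.2.2.2.2 _ hx

theorem star_mul_self_mem (hA : IsSubCStar A) {a : B} (ha : a ∈ A) : star a * a ∈ A :=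
  hA.2.2.2.2.1 _ (hA.2.2.2.2.2 a ha) a ha

theorem cutDown_mem (hA : IsSubCStar A) {a : B} (ha : a ∈ A) (ε : ℝ) : cutDown ε a ∈ A :=
  cfcₙ_mem (𝕜' := ℂ) (s := hA.toNonUnitalStarSubalgebra) (hs := hA.1) _ ha

end IsSubCStar

end Subalgebras

section Characters

omit [PartialOrder B] [StarOrderedRing B] in
theorem IsCharacter.norm_apply_le {φ : B →ₗ[ℂ] ℂ} (hφ : IsCharacter φ) (x : B) : ‖φ x‖ ≤ ‖x‖ := by
  let f : B →ₙₐ[ℂ] ℂ := { φ with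
    map_mul' := hφ.1
    map_zero' := map_zero φ }
  have hspec := spectrum.norm_le_norm_mul_of_mem
    (AlgHom.apply_mem_spectrum (Unitization.lift f) (x : Unitization ℂ B))
  simpa [f, Unitization.norm_inr (𝕜 := ℂ)] using hspec

omit [PartialOrder B] [StarOrderedRing B] in
theorem IsCharacter.continuous {φ : B →ₗ[ℂ] ℂ} (hφ : IsCharacter φ) : Continuous φ :=
  AddMonoidHomClass.continuous_of_bound φ 1 (by simpa only [one_mul] using hφ.norm_apply_le)

omit [PartialOrder B] [StarOrderedRing B] in
theorem IsCharacter.isIdeal_ker {φ : B →ₗ[ℂ] ℂ} (hφ : IsCharacter φ) :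
    IsIdeal (φ.ker : Set B) :=
  isIdeal_of_submodule _ (isClosed_singleton.preimage hφ.continuous) fun x hx c ↦ by
    simp_all [hφ.1]

omit [PartialOrder B] [StarOrderedRing B] in
theorem IsCharacter.apply_eq_zero_of_properlyInfinite {φ : B →ₗ[ℂ] ℂ} (hφ : IsCharacter φ) {a : B}
    (ha : ProperlyInfinite a) : φ a = 0 := by
  have hcont := hφ.continuous
  have hmul : φ a * φ a = φ 0 * φ (star 0) :=
    closure_minimal (s := gram '' ((closedRightIdeal a : Set B) ×ˢ closedRightIdeal a))
      (t := {q : B × B × B | φ q.1 * φ q.2.1 = φ q.2.2 * φ (star q.2.2)})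
      (by
        rintro _ ⟨⟨x, y⟩, -, rfl⟩
        simp only [gram, Set.mem_ofPred_eq, star_mul, star_star, hφ.1]
        ring)
      (isClosed_eq (by fun_prop) (by fun_prop)) (properlyInfinite_iff_absorbs.1 ha)
  simpa using hmul

theorem SeparatesIdeals.exists_nonneg_mem_notMem {A : Set B} (hsep : SeparatesIdeals A)
    (hA : IsSubCStar A) {J K : Set B} (hJ : IsIdeal J) (hK : IsIdeal K) (hKJ : ¬K ⊆ J) :
    ∃ a ∈ A, 0 ≤ a ∧ a ∈ K ∧ a ∉ J := by
  obtain ⟨a, haA, haK, haJ⟩ : ∃ a ∈ A, a ∈ K ∧ a ∉ J := by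
    by_contra! hcon
    have hinter : K ∩ J = K := hsep _ _ (hK.inter hJ) hK <| Set.Subset.antisymm
      (fun a ha ↦ ⟨ha.1.1, ha.2⟩) fun a ha ↦ ⟨⟨ha.1, hcon a ha.2 ha.1⟩, ha.2⟩
    exact hKJ (Set.inter_eq_left.1 hinter)
  exact ⟨star a * a, hA.star_mul_self_mem haA, star_mul_self_nonneg a,
    hK.mul_mem_left _ haK, mt hJ.mem_of_star_mul_self_mem haJ⟩

theorem not_exists_isCharacter {A : Set B} (hA : IsSubCStar A) (hsep : SeparatesIdeals A)
    (hinf : ∀ a ∈ A, 0 ≤ a → a ≠ 0 → ProperlyInfinite a) : ¬∃ φ : B →ₗ[ℂ] ℂ, IsCharacter φ := by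
  rintro ⟨φ, hφ⟩
  have hker : ¬Set.univ ⊆ (φ.ker : Set B) := fun h ↦ hφ.2 (LinearMap.ext fun x ↦ h trivial)
  obtain ⟨a, haA, ha₀, -, ha⟩ :=
    hsep.exists_nonneg_mem_notMem hA hφ.isIdeal_ker isIdeal_univ hker
  exact ha (hφ.apply_eq_zero_of_properlyInfinite
    (hinf a haA ha₀ (by rintro rfl; exact ha (φ.ker.zero_mem))))

end Characters

section Filling

theorem IsHereditary.mul_star_self_mem {D : Set B} (hD : IsHereditary D) {d z : B} (hd : d ∈ D)
    (hz : z ∈ closedRightIdeal d) : z * star z ∈ D := by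
  obtain ⟨hDsub, hDle⟩ := hD
  let S := hDsub.toNonUnitalStarSubalgebra
  have hclosed : IsClosed {z : B | z * star z ∈ D} := hDsub.1.preimage (by fun_prop)
  refine closure_minimal ?_ hclosed hz
  rintro _ ⟨c, rfl⟩
  have hbound : d * c * star (d * c) ≤ ‖c * star c‖ • (d * star d) := by
    simpa only [star_mul, star_star] using star_mul_mul_le_norm_smul (star c) (star d)
  have hdS : ‖c * star c‖ • (d * star d) ∈ S := by
    rw [← Complex.coe_smul]
    exact S.smul_mem _ (mul_mem (s := S) hd (star_mem (s := S) hd))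
  exact hDle _ _ hdS (mul_star_self_nonneg _) hbound

theorem PurelyInfinite.fills (hB : PurelyInfinite B) {A : Set B} (hA : IsSubCStar A)
    (hsep : SeparatesIdeals A) : Fills {a : B | a ∈ A ∧ 0 ≤ a} := by
  intro D hD _ J hJ hDJ
  obtain ⟨x, hxD, hxJ⟩ := Set.not_subset.1 hDJ
  set d := star x * x
  have hdD : d ∈ D := hD.1.star_mul_self_mem hxD
  have hd₀ : 0 ≤ d := star_mul_self_nonneg x
  have hdJ : ¬idealGen {d} ⊆ J := fun h ↦
    hxJ (hJ.mem_of_star_mul_self_mem (h (mem_idealGen_self d)))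
  obtain ⟨a, haA, ha₀, had, haJ⟩ :=
    hsep.exists_nonneg_mem_notMem hA hJ (isIdeal_idealGen {d}) hdJ
  obtain ⟨ε, hε, hcutJ⟩ := hJ.exists_cutDown_notMem ha₀ haJ
  obtain ⟨z, hz, hzz⟩ := (hB.cuntzBelow ha₀ hd₀ had).exists_star_mul_self_eq_cutDown ha₀ hd₀ hε
  exact ⟨z, fun hzJ ↦ hcutJ (hzz ▸ hJ.mul_mem_left (star z) hzJ), hD.mul_star_self_mem hdD hz,
    hzz ▸ hA.cutDown_mem haA ε, star_mul_self_nonneg z⟩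

end Filling

section ConditionalExpectation

omit [PartialOrder B] [StarOrderedRing B] in
theorem map_mem_of_mem_closSpan {f : B →ₗ[ℂ] B} (hf : Continuous f) {V : Submodule ℂ B}
    (hV : IsClosed (V : Set B)) {S : Set B} (h : ∀ s ∈ S, f s ∈ V) {x : B} (hx : x ∈ closSpan S) :
    f x ∈ V :=
  closure_minimal (Submodule.span_le (p := V.comap f).2 h) (hV.preimage hf) hx

omit [PartialOrder B] [StarOrderedRing B] in
theorem SymmetricInclusion.isIdeal_closSpan {A I : Set B} (hsym : SymmetricInclusion A)
    (hI : IsRestricted A I) : IsIdeal (closSpan {z : B | ∃ x ∈ I, ∃ b : B, z = x * b}) := by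
  have hcomm := hsym I hI
  refine isIdeal_of_submodule (Submodule.span ℂ _).topologicalClosure isClosed_closure
    fun x hx c ↦ ⟨?_, ?_⟩
  · change c * x ∈ closSpan _
    change x ∈ closSpan _ at hx
    rw [hcomm] at hx ⊢
    refine map_mem_of_mem_closSpan (f := .mulLeft ℂ c) (continuous_const_mul c)
      (V := (Submodule.span ℂ _).topologicalClosure) isClosed_closure ?_ hx
    rintro _ ⟨b, y, hy, rfl⟩
    exact subset_closure (Submodule.subset_span ⟨c * b, y, hy, (mul_assoc c b y).symm⟩)
  · refine map_mem_of_mem_closSpan (f := .mulRight ℂ c) (continuous_mul_const c)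
      (V := (Submodule.span ℂ _).topologicalClosure) isClosed_closure ?_ hx
    rintro _ ⟨y, hy, b, rfl⟩
    exact subset_closure (Submodule.subset_span ⟨y, hy, b * c, mul_assoc y b c⟩)

theorem mem_closSpan_mul {I : Set B} {x : B} (hx : x ∈ I) :
    x ∈ closSpan {z : B | ∃ y ∈ I, ∃ b : B, z = y * b} := by
  have hxR : x ∈ closedRightIdeal x :=
    closedRightIdeal_le (mul_mem_closedRightIdeal x (star x))
      (mem_closedRightIdeal_of_mul_star_self_le le_rfl)
  refine closure_mono ?_ hxR
  rintro _ ⟨b, rfl⟩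
  exact Submodule.subset_span ⟨x, hx, b, rfl⟩

theorem closSpan_mul_eq_of_separatesIdeals {A J : Set B} (hsym : SymmetricInclusion A)
    (hsep : SeparatesIdeals A) (hJ : IsIdeal J) :
    closSpan {z : B | ∃ x ∈ J ∩ A, ∃ b : B, z = x * b} = J := by
  refine hsep _ _ (hsym.isIdeal_closSpan ⟨J, hJ, rfl⟩) hJ (Set.Subset.antisymm ?_ ?_)
  · refine Set.inter_subset_inter_left A fun x hx ↦ ?_
    refine map_mem_of_mem_closSpan (f := .id) continuous_id (V := hJ.toSubmodule) hJ.isClosed ?_ hx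
    rintro _ ⟨y, hy, b, rfl⟩
    exact hJ.mul_mem_right b hy.1
  · exact fun x hx ↦ ⟨mem_closSpan_mul hx, hx.2⟩

variable {A : Set B} {E : B →ₗ[ℂ] B}

theorem map_mul_mem_of_mem (hsym : SymmetricInclusion A) (hsep : SeparatesIdeals A)
    (hE : Continuous E) (hbimod : ∀ a ∈ A, ∀ c ∈ A, ∀ b : B, E (a * b * c) = a * E b * c)
    {J : Set B} (hJ : IsIdeal J) {u v : B} (hu : u ∈ J) (hv : v ∈ J) : E (u * v) ∈ J := by
  have hIB := closSpan_mul_eq_of_separatesIdeals hsym hsep hJ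
  have hBI := (hsym (J ∩ A) ⟨J, hJ, rfl⟩).symm.trans hIB
  rw [← hIB] at hu
  refine map_mem_of_mem_closSpan (f := E ∘ₗ .mulRight ℂ v) (hE.comp (continuous_mul_const v))
    (V := hJ.toSubmodule) hJ.isClosed ?_ hu
  rintro _ ⟨x, hx, b, rfl⟩
  rw [← hBI] at hv
  refine map_mem_of_mem_closSpan (f := E ∘ₗ .mulLeft ℂ (x * b))
    (hE.comp (continuous_const_mul (x * b))) (V := hJ.toSubmodule) hJ.isClosed ?_ hv
  rintro _ ⟨c, y, hy, rfl⟩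
  have hmap : E (x * b * (c * y)) = x * E (b * c) * y := by
    simpa only [mul_assoc] using hbimod x hx.2 y hy.2 (b * c)
  exact (congrArg (· ∈ J) hmap).mpr (hJ.mul_mem_left _ hy.1)

theorem PurelyInfinite.cuntzBelow_map (hB : PurelyInfinite B) (hsym : SymmetricInclusion A)
    (hsep : SeparatesIdeals A) (hE : Continuous E) (hpos : ∀ b : B, 0 ≤ b → 0 ≤ E b)
    (hbimod : ∀ a ∈ A, ∀ c ∈ A, ∀ b : B, E (a * b * c) = a * E b * c) {b : B} (hb : 0 ≤ b) :
    CuntzBelow (E b) b := by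
  have hJ := isIdeal_idealGen ({b} : Set B)
  have hsqrt := hJ.sqrt_mem hb (mem_idealGen_self b)
  have hEb := map_mul_mem_of_mem hsym hsep hE hbimod hJ hsqrt hsqrt
  rw [CFC.sqrt_mul_sqrt_self b hb] at hEb
  exact hB.cuntzBelow (hpos b hb) hb hEb

theorem isIdeal_setOf_map_star_mul_self (hE : Continuous E) (hpos : ∀ b : B, 0 ≤ b → 0 ≤ E b)
    {J : Set B} (hJ : IsIdeal J) (hsymm : ∀ b : B, E (star b * b) ∈ J → E (b * star b) ∈ J) :
    IsIdeal {x : B | E (star x * x) ∈ J} := by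
  have hle (a b : B) (hb : E b ∈ J) (ha : 0 ≤ a) (hab : a ≤ b) : E a ∈ J := by
    refine hJ.mem_of_nonneg_of_le (hpos a ha) (sub_nonneg.1 ?_) hb
    simpa only [map_sub] using hpos _ (sub_nonneg.2 hab)
  refine isIdeal_setOf_star_mul_self (C := E ⁻¹' J) (hJ.isClosed.preimage hE)
    (by simpa using hJ.zero_mem) (fun a ha b hb _ _ ↦ by simpa using hJ.add_mem ha hb)
    (fun a b hb ha hab ↦ hle a b hb ha hab) fun b hb hb₀ z ↦ ?_
  have hflip : E (star (star z * CFC.sqrt b) * (star z * CFC.sqrt b)) ∈ J := by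
    refine hle _ _ ?_ (star_mul_self_nonneg _) (star_mul_mul_le_norm_smul (star z) (CFC.sqrt b))
    rw [star_sqrt, CFC.sqrt_mul_sqrt_self b hb₀, ← Complex.coe_smul, map_smul]
    exact hJ.smul_mem _ hb
  have hmem := hsymm _ hflip
  rwa [star_mul, star_star, star_sqrt, mul_assoc, ← mul_assoc (CFC.sqrt b),
    CFC.sqrt_mul_sqrt_self b hb₀, ← mul_assoc] at hmem

theorem mem_of_map_mem (hA : IsSubCStar A) (hsep : SeparatesIdeals A) (hE : Continuous E)
    (hid : ∀ a ∈ A, E a = a) (hpos : ∀ b : B, 0 ≤ b → 0 ≤ E b) {J : Set B} (hJ : IsIdeal J)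
    (hsymm : ∀ b : B, E (star b * b) ∈ J → E (b * star b) ∈ J) {b : B} (hb : 0 ≤ b)
    (hEb : E b ∈ J) : b ∈ J := by
  have hN : {x : B | E (star x * x) ∈ J} = J := by
    refine hsep _ _ (isIdeal_setOf_map_star_mul_self hE hpos hJ hsymm) hJ (Set.ext fun x ↦ ?_)
    refine and_congr_left fun hxA ↦ ?_
    rw [Set.mem_ofPred_eq, hid _ (hA.star_mul_self_mem hxA)]
    exact ⟨hJ.mem_of_star_mul_self_mem, hJ.mul_mem_left _⟩
  have hsqrt : CFC.sqrt b ∈ J := by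
    rw [← hN, Set.mem_ofPred_eq, star_sqrt, CFC.sqrt_mul_sqrt_self b hb]
    exact hEb
  simpa only [CFC.sqrt_mul_sqrt_self b hb] using hJ.mul_mem_left (CFC.sqrt b) hsqrt

theorem ProperlyInfinite.cuntzBelow {a b : B} (hb : ProperlyInfinite b) (ha₀ : 0 ≤ a)
    (hb₀ : 0 ≤ b) (hab : a ∈ idealGen {b}) : CuntzBelow a b := by
  rw [properlyInfinite_iff_absorbs, absorbs_iff_mem_absorbedIdeal hb₀ hb₀] at hb
  have hba := (absorbs_iff_mem_absorbedIdeal hb₀ ha₀).2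
    (idealGen_subset (isIdeal_absorbedIdeal hb₀) (Set.singleton_subset_iff.2 hb) hab)
  rw [Absorbs, closure_gram_image_eq_closure_conjugates hb₀] at hba
  rw [cuntzBelow_iff_mem_closure]
  refine map_mem_closure (f := fun q : B × B × B ↦ q.2.1) (by fun_prop) hba ?_
  rintro _ ⟨⟨x, y⟩, rfl⟩
  exact ⟨y, rfl⟩

theorem cuntzBelow_of_mem_idealGen (hA : IsSubCStar A) (hsep : SeparatesIdeals A)
    (hE : Continuous E) (hmem : ∀ b : B, E b ∈ A) (hid : ∀ a ∈ A, E a = a)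
    (hpos : ∀ b : B, 0 ≤ b → 0 ≤ E b)
    (hsymm : ∀ I : Set B, IsRestricted A I → ∀ b : B, E (star b * b) ∈ I → E (b * star b) ∈ I)
    (hinf : ∀ a ∈ A, 0 ≤ a → a ≠ 0 → ProperlyInfinite a)
    (hbelow : ∀ b : B, 0 ≤ b → CuntzBelow (E b) b) {a b : B} (ha : 0 ≤ a) (hb : 0 ≤ b)
    (hb₀ : b ≠ 0) (hab : a ∈ idealGen {b}) : CuntzBelow a b := by
  have hJ := isIdeal_idealGen ({E b} : Set B)
  have hbJ : b ∈ idealGen {E b} :=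
    mem_of_map_mem hA hsep hE hid hpos hJ
      (fun c hc ↦ (hsymm _ ⟨_, hJ, rfl⟩ c ⟨hc, hmem _⟩).1) hb (mem_idealGen_self _)
  have hEb₀ : E b ≠ 0 := fun h ↦ hb₀ (eq_zero_of_mem_idealGen_zero (h ▸ hbJ))
  have haJ : a ∈ idealGen {E b} := idealGen_subset hJ (Set.singleton_subset_iff.2 hbJ) hab
  exact ((hinf _ (hmem b) (hpos b hb) hEb₀).cuntzBelow ha (hpos b hb) haJ).trans (hbelow b hb)

end ConditionalExpectation

end KM

/-- For a symmetric C*-inclusion with a residually symmetric conditional expectation `E`,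
if `A` separates ideals in `B`, then `B` is purely infinite iff every nonzero `a ∈ A⁺` is
properly infinite in `B` and `E b ≼ b` for every `b ∈ B⁺`; moreover, if `B` is purely
infinite then `A⁺` fills `B`. -/
theorem stmt3 (A : Set B) (hA : IsSubCStar A) (hsym : SymmetricInclusion A)
    (E : B →ₗ[ℂ] B)
    (hEmem : ∀ b : B, E b ∈ A)
    (hEnorm : ∀ b : B, ‖E b‖ ≤ ‖b‖)
    (hEid : ∀ a ∈ A, E a = a)
    (hEpos : ∀ b : B, 0 ≤ b → 0 ≤ E b)
    (hEbimod : ∀ a ∈ A, ∀ c ∈ A, ∀ b : B, E (a * b * c) = a * E b * c)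
    (hEressym : ∀ I : Set B, IsRestricted A I → ∀ b : B,
      E (star b * b) ∈ I → E (b * star b) ∈ I)
    (hsepid : SeparatesIdeals A) :
    (PurelyInfinite B ↔
      ((∀ a ∈ A, 0 ≤ a → a ≠ 0 → ProperlyInfinite a) ∧
        ∀ b : B, 0 ≤ b → CuntzBelow (E b) b)) ∧
    (PurelyInfinite B → Fills {a : B | a ∈ A ∧ 0 ≤ a}) := by
  have hEcont : Continuous E := AddMonoidHomClass.continuous_of_bound E 1 (by simpa using hEnorm)
  refine ⟨⟨fun hB ↦ ⟨fun a _ ha _ ↦ hB.properlyInfinite ha, fun b hb ↦ ?_⟩,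
    fun ⟨hinf, hbelow⟩ ↦ ⟨not_exists_isCharacter hA hsepid hinf, fun a b ha _ hb hb₀ ↦ ⟨?_, ?_⟩⟩⟩,
    fun hB ↦ hB.fills hA hsepid⟩
  · exact hB.cuntzBelow_map hsym hsepid hEcont hEpos hEbimod hb
  · exact fun hab ↦ hab.mem_of_mem (isIdeal_idealGen {b}) (mem_idealGen_self b)
  · exact cuntzBelow_of_mem_idealGen hA hsepid hEcont hEmem hEid hEpos hEressym hinf hbelow
      ha hb hb₀
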